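/- arXiv:2309.16897 — 5 statements merged into one kernel-verified Lean document; each statement's English description precedes it below -/
import Mathlib

section
/- Let G be a finite simple graph on vertex set {1,…,n} with edge set E_G, let H be a spanning subgraph of G with edge set E_H ⊆ E_G, and let x* ∈ {−1,1}^n. For x ∈ {−1,1}^n define φ(x) = Σ_{{i,j}∈E_G∖E_H} x_i x_j x*_i x*_j − Σ_{{i,j}∈E_H} x_i x_j x*_i x*_j. Suppose that for every x ∈ {−1,1}^n with x ∉ {(1,…,1), (−1,…,−1)} one has xᵀ L_H x < (1/2)·xᵀ L_G x. Then φ(x*) = |E_G| − 2|E_H|, and for every x ∈ {−1,1}^n with x ∉ {x*, −x*} one has φ(x) < φ(x*); in particular, x* and −x* are the only maximizers of φ over {−1,1}^n. -/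
open Finset SimpleGraph Matrix

/-- The symmetric function `{i,j} ↦ x i * x j` on unordered pairs. -/
noncomputable def edgeProd {n : ℕ} (x : Fin n → ℝ) : Sym2 (Fin n) → ℝ :=
  Sym2.lift ⟨fun i j => x i * x j, fun i j => mul_comm (x i) (x j)⟩

/-- `φ(x) = Σ_{{i,j}∈E_G∖E_H} x_i x_j x*_i x*_j − Σ_{{i,j}∈E_H} x_i x_j x*_i x*_j`. -/
noncomputable def phiFun {n : ℕ} (G H : SimpleGraph (Fin n))
    [DecidableRel G.Adj] [DecidableRel H.Adj] (xs x : Fin n → ℝ) : ℝ :=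
  (∑ e ∈ G.edgeFinset \ H.edgeFinset, edgeProd (fun i => x i * xs i) e) -
    ∑ e ∈ H.edgeFinset, edgeProd (fun i => x i * xs i) e

namespace SimpleGraph

/-- Summing a function of unordered pairs over darts counts every edge twice. -/
theorem sum_dart_edge {V R : Type*} [Fintype V] [DecidableEq V] [Semiring R]
    (G : SimpleGraph V) [DecidableRel G.Adj] (f : Sym2 V → R) :
    ∑ d : G.Dart, f d.edge = 2 * ∑ e ∈ G.edgeFinset, f e := by
  rw [← sum_fiberwise_of_maps_to (s := univ) (t := G.edgeFinset) (g := Dart.edge)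
    fun d _ => mem_edgeFinset.2 d.edge_mem, mul_sum]
  refine sum_congr rfl fun e he => ?_
  rw [sum_congr rfl fun d hd => congrArg f (mem_filter.1 hd).2, sum_const,
    G.dart_edge_fiber_card e (mem_edgeFinset.1 he), nsmul_eq_mul, Nat.cast_ofNat]

/-- Summing over darts is summing over ordered pairs of adjacent vertices. -/
theorem sum_dart {V R : Type*} [Fintype V] [AddCommMonoid R]
    (G : SimpleGraph V) [DecidableRel G.Adj] (f : V → V → R) :
    ∑ d : G.Dart, f d.fst d.snd = ∑ i, ∑ j, if G.Adj i j then f i j else 0 := by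
  rw [← Fintype.sum_prod_type' (fun i j => if G.Adj i j then f i j else 0), ← sum_filter]
  refine sum_bij' (fun d _ => (d.fst, d.snd)) (fun p h => ⟨p, (mem_filter.1 h).2⟩) ?_ ?_ ?_ ?_ ?_
    <;> simp

end SimpleGraph

theorem dotProduct_lapMatrix_mulVec_of_sign {n : ℕ} (G : SimpleGraph (Fin n))
    [DecidableRel G.Adj] {x : Fin n → ℝ} (hx : ∀ i, x i = 1 ∨ x i = -1) :
    x ⬝ᵥ (G.lapMatrix ℝ *ᵥ x) =
      2 * (#G.edgeFinset : ℝ) - 2 * ∑ e ∈ G.edgeFinset, edgeProd x e := by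
  have hsq (d : G.Dart) : (x d.fst - x d.snd) ^ 2 = 2 * (1 - edgeProd x d.edge) := by
    change _ = 2 * (1 - x d.fst * x d.snd)
    rcases hx d.fst with h | h <;> rcases hx d.snd with h' | h' <;> rw [h, h'] <;> norm_num
  rw [← toLinearMap₂'_apply', lapMatrix_toLinearMap₂',
    ← G.sum_dart fun i j => (x i - x j) ^ 2, sum_congr rfl fun d _ => hsq d, ← mul_sum,
    G.sum_dart_edge fun e => 1 - edgeProd x e, sum_sub_distrib, sum_const, nsmul_one]
  ring

theorem phiFun_eq_sum_sub_two_mul_sum {n : ℕ} {G H : SimpleGraph (Fin n)}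
    [DecidableRel G.Adj] [DecidableRel H.Adj] (hHG : H ≤ G) (xs x : Fin n → ℝ) :
    phiFun G H xs x = ∑ e ∈ G.edgeFinset, edgeProd (fun i => x i * xs i) e -
      2 * ∑ e ∈ H.edgeFinset, edgeProd (fun i => x i * xs i) e := by
  rw [phiFun, ← sum_sdiff (edgeFinset_subset_edgeFinset.2 hHG)]
  ring

theorem edgeProd_one {n : ℕ} (e : Sym2 (Fin n)) : edgeProd (fun _ => 1) e = 1 := by
  induction e with
  | _ i j => simp [edgeProd]

theorem stmt_0 {n : ℕ} (G H : SimpleGraph (Fin n))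
    [DecidableRel G.Adj] [DecidableRel H.Adj] (hHG : H ≤ G)
    (xs : Fin n → ℝ) (hxs : ∀ i, xs i = 1 ∨ xs i = -1)
    (hcut : ∀ x : Fin n → ℝ, (∀ i, x i = 1 ∨ x i = -1) →
      x ≠ (fun _ => 1) → x ≠ (fun _ => -1) →
      x ⬝ᵥ ((H.lapMatrix ℝ) *ᵥ x) < (1 / 2) * (x ⬝ᵥ ((G.lapMatrix ℝ) *ᵥ x))) :
    phiFun G H xs xs = (G.edgeFinset.card : ℝ) - 2 * (H.edgeFinset.card : ℝ) ∧
      ∀ x : Fin n → ℝ, (∀ i, x i = 1 ∨ x i = -1) →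
        x ≠ xs → x ≠ (fun i => -xs i) → phiFun G H xs x < phiFun G H xs xs := by
  have hsq (i : Fin n) : xs i * xs i = 1 := by
    rcases hxs i with h | h <;> rw [h] <;> norm_num
  have hmax : phiFun G H xs xs = (G.edgeFinset.card : ℝ) - 2 * (H.edgeFinset.card : ℝ) := by
    simp [phiFun_eq_sum_sub_two_mul_sum hHG, hsq, edgeProd_one]
  refine ⟨hmax, fun x hx hne hne' => ?_⟩
  have hy (i : Fin n) : x i * xs i = 1 ∨ x i * xs i = -1 := by
    rcases hx i with h | h <;> rcases hxs i with h' | h' <;> rw [h, h'] <;> norm_num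
  have hlt := hcut (fun i => x i * xs i) hy
    (fun h => hne <| funext fun i => by
      linear_combination xs i * congrFun h i - x i * hsq i)
    (fun h => hne' <| funext fun i => by
      linear_combination xs i * congrFun h i - x i * hsq i)
  rw [dotProduct_lapMatrix_mulVec_of_sign G hy, dotProduct_lapMatrix_mulVec_of_sign H hy] at hlt
  rw [hmax, phiFun_eq_sum_sub_two_mul_sum hHG]
  linarith
end

section
/- Let n ≥ 2 and let G be a finite simple graph on vertex set {1,…,n}, let s : {1,…,n} → ℕ (self-loop counts), and let D be the diagonal matrix with D_ii = deg_G(i) + s_i; assume D_ii > 0 for all i, and let d_min = min_i D_ii. Let L̃_G = D^{−1/2} L_G D^{−1/2} and let λ be the second-smallest eigenvalue of L̃_G. Let η ∈ (0,1) satisfy d_min·λ > (18/η)·log n, and set δ = sqrt(18·log n / (η·d_min·λ)). Let H be the random spanning subgraph of G obtained by including each edge of G independently with probability η (independent Bernoulli(η) choices, one per edge). Then with probability at least 1 − 1/n², L_H ⪯ η(1+δ)·L_G in the positive semidefinite order. -/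
open Finset SimpleGraph Matrix
open scoped Classical

/-- The Laplacian of the single edge `{a,b}`: `(χ_a − χ_b)(χ_a − χ_b)ᵀ`,
as a symmetric function of the unordered pair. -/
noncomputable def edgeLapSym2 {n : ℕ} : Sym2 (Fin n) → Matrix (Fin n) (Fin n) ℝ :=
  Sym2.lift ⟨fun a b => Matrix.of fun i j =>
      ((if i = a then (1 : ℝ) else 0) - (if i = b then 1 else 0)) *
        ((if j = a then (1 : ℝ) else 0) - (if j = b then 1 else 0)),
    fun a b => by ext i j; simp only [Matrix.of_apply]; ring⟩

section LieTrotter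

open Filter Topology NormedSpace

variable {𝔸 : Type*} [NormedRing 𝔸]

theorem norm_pow_sub_pow_le_of_norm_le {x y : 𝔸} [NormOneClass 𝔸] {M : ℝ} (hM : 1 ≤ M)
    (hx : ‖x‖ ≤ M) (hy : ‖y‖ ≤ M) (N : ℕ) :
    ‖x ^ N - y ^ N‖ ≤ N * ‖x - y‖ * M ^ N := by
  have hM0 : 0 ≤ M := zero_le_one.trans hM
  induction N with
  | zero => simp
  | succ k ih =>
    have e : x ^ (k + 1) - y ^ (k + 1) = (x ^ k - y ^ k) * x + y ^ k * (x - y) := by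
      rw [pow_succ, pow_succ]; noncomm_ring
    have h1 : ‖(x ^ k - y ^ k) * x‖ ≤ (k * ‖x - y‖ * M ^ k) * M :=
      (norm_mul_le _ _).trans (mul_le_mul ih hx (norm_nonneg _) (by positivity))
    have h2 : ‖y ^ k * (x - y)‖ ≤ M ^ k * ‖x - y‖ :=
      (norm_mul_le _ _).trans (mul_le_mul_of_nonneg_right
        ((norm_pow_le _ _).trans (pow_le_pow_left₀ (norm_nonneg _) hy _)) (norm_nonneg _))
    have h3 : M ^ k * ‖x - y‖ ≤ M ^ k * M * ‖x - y‖ := by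
      rw [mul_assoc]
      exact mul_le_mul_of_nonneg_left (le_mul_of_one_le_left (norm_nonneg _) hM) (by positivity)
    rw [e]
    refine (norm_add_le _ _).trans ((add_le_add h1 (h2.trans h3)).trans (le_of_eq ?_))
    push_cast; ring

variable [NormedAlgebra ℝ 𝔸] [CompleteSpace 𝔸]

theorem norm_exp_le_exp_norm [NormOneClass 𝔸] (x : 𝔸) : ‖exp x‖ ≤ Real.exp ‖x‖ := by
  have hr := exp_series_hasSum_exp' (𝕂 := ℝ) ‖x‖
  rw [← Real.exp_eq_exp_ℝ] at hr
  refine (exp_series_hasSum_exp' (𝕂 := ℝ) x).norm_le_of_bounded hr fun k ↦ ?_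
  rw [norm_smul, smul_eq_mul, norm_inv, Real.norm_natCast]
  gcongr
  exact norm_pow_le _ _

/-- The Lie–Trotter product formula. -/
theorem tendsto_exp_mul_exp_pow [NormOneClass 𝔸] (A B : 𝔸) :
    Tendsto (fun N : ℕ ↦ (exp ((N : ℝ)⁻¹ • A) * exp ((N : ℝ)⁻¹ • B)) ^ N) atTop
      (𝓝 (exp (A + B))) := by
  let : NormedAlgebra ℚ 𝔸 := NormedAlgebra.restrictScalars ℚ ℝ 𝔸
  have norm_exp_smul_le (x : 𝔸) (N : ℕ) : ‖exp ((N : ℝ)⁻¹ • x)‖ ≤ Real.exp (‖x‖ / N) := by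
    refine (norm_exp_le_exp_norm _).trans (Real.exp_le_exp.2 (le_of_eq ?_))
    rw [norm_smul, norm_inv, Real.norm_natCast, inv_mul_eq_div]
  have hd : HasDerivAt (fun t : ℝ ↦ exp (t • A) * exp (t • B) - exp (t • (A + B))) 0 0 := by
    have h := ((hasDerivAt_exp_smul_const (𝕂 := ℝ) A 0).mul
      (hasDerivAt_exp_smul_const (𝕂 := ℝ) B 0)).sub
      (hasDerivAt_exp_smul_const (𝕂 := ℝ) (A + B) 0)
    convert! h using 1
    simp
  have ho := hd.isLittleO
  simp only [zero_smul, exp_zero, mul_one, sub_self, sub_zero, smul_zero] at ho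
  have hlim : Tendsto (fun N : ℕ ↦ (N : ℝ)⁻¹) atTop (𝓝 0) := tendsto_inv_atTop_nhds_zero_nat
  have h1 := (ho.comp_tendsto hlim).norm_left.tendsto_div_nhds_zero
  have h2 : Tendsto (fun N : ℕ ↦
      ‖exp ((N : ℝ)⁻¹ • A) * exp ((N : ℝ)⁻¹ • B) - exp ((N : ℝ)⁻¹ • (A + B))‖ / (N : ℝ)⁻¹ *
        Real.exp (‖A‖ + ‖B‖)) atTop (𝓝 0) := by
    simpa using h1.mul_const (Real.exp (‖A‖ + ‖B‖))
  rw [tendsto_iff_norm_sub_tendsto_zero]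
  refine squeeze_zero' (Eventually.of_forall fun _ ↦ norm_nonneg _) ?_ h2
  filter_upwards [eventually_ge_atTop 1] with N hN
  have hN0 : (N : ℝ) ≠ 0 := by positivity
  have e : exp (A + B) = exp ((N : ℝ)⁻¹ • (A + B)) ^ N := by
    rw [← NormedSpace.exp_nsmul, ← Nat.cast_smul_eq_nsmul ℝ, smul_smul, mul_inv_cancel₀ hN0, one_smul]
  have hx : ‖exp ((N : ℝ)⁻¹ • A) * exp ((N : ℝ)⁻¹ • B)‖ ≤ Real.exp ((‖A‖ + ‖B‖) / N) := by
    rw [add_div, Real.exp_add]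
    exact (norm_mul_le _ _).trans (mul_le_mul (norm_exp_smul_le A N) (norm_exp_smul_le B N)
      (norm_nonneg _) (Real.exp_pos _).le)
  have hy : ‖exp ((N : ℝ)⁻¹ • (A + B))‖ ≤ Real.exp ((‖A‖ + ‖B‖) / N) :=
    (norm_exp_smul_le _ N).trans (Real.exp_le_exp.2 (by gcongr; exact norm_add_le _ _))
  rw [e]
  refine (norm_pow_sub_pow_le_of_norm_le (Real.one_le_exp (by positivity)) hx hy N).trans
    (le_of_eq ?_)
  rw [← Real.exp_nat_mul, mul_div_cancel₀ _ hN0, div_inv_eq_mul]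
  ring

/-- The exponential of a multiple of an idempotent. -/
theorem exp_smul_of_isIdempotentElem {P : 𝔸} (hP : IsIdempotentElem P) (c : ℝ) :
    exp (c • P) = 1 + (Real.exp c - 1) • P := by
  have h1 : HasSum (fun k : ℕ ↦ ((k.factorial : ℝ)⁻¹ * c ^ k) • P) (Real.exp c • P) := by
    have := exp_series_hasSum_exp' (𝕂 := ℝ) c
    rw [← Real.exp_eq_exp_ℝ] at this
    simpa using this.smul_const P
  have h2 : HasSum (fun k : ℕ ↦ if k = 0 then 1 - P else 0) (1 - P) := hasSum_ite_eq 0 _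
  have h3 := exp_series_hasSum_exp' (𝕂 := ℝ) (c • P)
  refine h3.unique ?_
  convert! h1.add h2 using 1
  · ext k
    rcases k with _ | k
    · simp
    · simp [smul_pow, hP.pow_succ_eq, smul_smul]
  · rw [sub_smul, one_smul]; abel

end LieTrotter

section RankOne

variable {m : Type*} [Fintype m] [DecidableEq m]

open Polynomial in
theorem exists_polynomial_dotProduct_pow_rankOne_perturbation (B : Matrix m m ℝ) (u w : m → ℝ)
    (hβ : ∀ i : ℕ, 0 ≤ u ⬝ᵥ (B ^ i *ᵥ w)) (k : ℕ) : ∀ i : ℕ,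
    ∃ p : ℝ[X], p.natDegree ≤ k ∧ (∀ j, 0 ≤ p.coeff j) ∧
      ∀ t : ℝ, u ⬝ᵥ ((B ^ i * (B + t • vecMulVec w u) ^ k) *ᵥ w) = p.eval t := by
  induction k with
  | zero =>
    intro i
    refine ⟨C (u ⬝ᵥ (B ^ i *ᵥ w)), by simp, fun j ↦ ?_, by simp⟩
    rw [coeff_C]; split_ifs <;> simp [hβ]
  | succ k ih =>
    intro i
    obtain ⟨p, hpd, hpc, hp⟩ := ih (i + 1)
    obtain ⟨q, hqd, hqc, hq⟩ := ih 0
    refine ⟨p + C (u ⬝ᵥ (B ^ i *ᵥ w)) * (X * q), ?_, fun j ↦ ?_, fun t ↦ ?_⟩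
    · refine (natDegree_add_le _ _).trans (max_le (by omega) ?_)
      refine (natDegree_C_mul_le _ _).trans (natDegree_mul_le.trans ?_)
      have := natDegree_X_le (R := ℝ)
      omega
    · rw [coeff_add, coeff_C_mul]
      refine add_nonneg (hpc j) (mul_nonneg (hβ i) ?_)
      rcases j with _ | j
      · simp
      · rw [coeff_X_mul]; exact hqc j
    · have hq := hq t
      rw [pow_zero, one_mul] at hq
      rw [eval_add, eval_mul, eval_C, eval_mul, eval_X, ← hp, ← hq, pow_succ' _ k, ← mul_assoc,
        mul_add, ← pow_succ, add_mul, add_mulVec, dotProduct_add]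
      congr 1
      rw [Matrix.mul_smul, mul_vecMulVec, smul_mul, vecMulVec_mul, smul_mulVec, vecMulVec_mulVec]
      simp only [dotProduct_smul, smul_eq_mul, ← dotProduct_mulVec, op_smul_eq_smul]
      ring

open Polynomial in
theorem exists_polynomial_trace_pow_rankOne_perturbation (B : Matrix m m ℝ) (u w : m → ℝ)
    (hβ : ∀ i : ℕ, 0 ≤ u ⬝ᵥ (B ^ i *ᵥ w)) (k : ℕ) : ∀ i : ℕ,
    ∃ p : ℝ[X], p.natDegree ≤ k ∧ (∀ j, 0 ≤ p.coeff j) ∧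
      ∀ t : ℝ, trace ((B + t • vecMulVec w u) ^ k * B ^ i) = trace (B ^ (k + i)) + p.eval t := by
  induction k with
  | zero => exact fun i ↦ ⟨0, by simp⟩
  | succ k ih =>
    intro i
    obtain ⟨p, hpd, hpc, hp⟩ := ih (i + 1)
    obtain ⟨q, hqd, hqc, hq⟩ := exists_polynomial_dotProduct_pow_rankOne_perturbation B u w hβ k i
    refine ⟨p + X * q, ?_, fun j ↦ ?_, fun t ↦ ?_⟩
    · refine (natDegree_add_le _ _).trans (max_le (by omega) (natDegree_mul_le.trans ?_))
      have := natDegree_X_le (R := ℝ)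
      omega
    · rw [coeff_add]
      refine add_nonneg (hpc j) ?_
      rcases j with _ | j
      · simp
      · rw [coeff_X_mul]; exact hqc j
    · have hp := hp t
      rw [show k + 1 + i = k + (i + 1) by ring, eval_add, eval_mul, eval_X, ← add_assoc, ← hp,
        ← hq, pow_succ _ k, mul_assoc, add_mul, mul_add, trace_add, ← pow_succ']
      congr 1
      rw [smul_mul, vecMulVec_mul, Matrix.mul_smul, mul_vecMulVec, trace_smul, trace_vecMulVec,
        dotProduct_comm, ← dotProduct_mulVec, mulVec_mulVec, smul_eq_mul]

/-- Alternating products `A Q A Q ⋯ A` are positive semidefinite. -/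
theorem posSemidef_mul_pow_mul {A Q : Matrix m m ℝ} (hA : A.PosSemidef) (hQ : Q.PosSemidef) :
    ∀ i : ℕ, ((A * Q) ^ i * A).PosSemidef
  | 0 => by simpa
  | 1 => by
    have := hQ.mul_mul_conjTranspose_same A
    rwa [hA.isHermitian.eq, ← pow_one (A * Q)] at this
  | i + 2 => by
    have := (posSemidef_mul_pow_mul hA hQ i).mul_mul_conjTranspose_same (A * Q)
    rw [conjTranspose_mul, hA.isHermitian.eq, hQ.isHermitian.eq] at this
    convert this using 1
    rw [pow_succ', pow_succ]
    simp only [mul_assoc]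

open Polynomial in
theorem eval_exp_div_convexComb_le {p : ℝ[X]} {N : ℕ} (hN : N ≠ 0) (hdeg : p.natDegree ≤ N)
    (hp : ∀ j, 0 ≤ p.coeff j) {η σ s : ℝ} (hη0 : 0 ≤ η) (hη1 : η ≤ 1)
    (hs : 1 - η + η * Real.exp σ ≤ Real.exp s) :
    (1 - η) * p.eval 1 + η * p.eval (Real.exp (σ / N)) ≤ p.eval (Real.exp (s / N)) := by
  have hN' : (0 : ℝ) < N := by positivity
  simp only [eval_eq_sum_range' (Nat.lt_succ_of_le hdeg), mul_sum, ← sum_add_distrib]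
  refine sum_le_sum fun k hk ↦ ?_
  have hk : k ≤ N := Nat.lt_succ_iff.1 (mem_range.1 hk)
  have hr0 : (0 : ℝ) ≤ k / N := by positivity
  have hr1 : (k : ℝ) / N ≤ 1 := (div_le_one hN').2 (by exact_mod_cast hk)
  have hexp (a : ℝ) : Real.exp (a / N) ^ k = Real.exp a ^ ((k : ℝ) / N) := by
    rw [← Real.exp_nat_mul, ← Real.exp_mul]; ring_nf
  have hc := (Real.concaveOn_rpow hr0 hr1).2 (Set.mem_Ici.2 zero_le_one)
    (Set.mem_Ici.2 (Real.exp_pos σ).le) (sub_nonneg.2 hη1) hη0 (by ring)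
  simp only [smul_eq_mul, Real.one_rpow, mul_one] at hc
  have hm : (1 - η + η * Real.exp σ) ^ ((k : ℝ) / N) ≤ Real.exp s ^ ((k : ℝ) / N) :=
    Real.rpow_le_rpow (add_nonneg (sub_nonneg.2 hη1) (by positivity)) hs hr0
  rw [hexp, hexp, one_pow]
  have := mul_le_mul_of_nonneg_left (hc.trans hm) (hp k)
  linarith

end RankOne

section TraceExp

variable {m : Type*} [Fintype m]

theorem isHermitian_vecMulVec_self (u : m → ℝ) : (vecMulVec u u).IsHermitian := by
  simpa using (posSemidef_vecMulVec_self_star u).isHermitian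

theorem isHermitian_sum_smul_vecMulVec {ι : Type*} (s : Finset ι) (c : ι → ℝ) (v : ι → m → ℝ) :
    (∑ e ∈ s, c e • vecMulVec (v e) (v e)).IsHermitian :=
  isSelfAdjoint_sum s fun e _ ↦ (isHermitian_vecMulVec_self (v e)).smul (IsSelfAdjoint.all _)

variable [DecidableEq m]

open NormedSpace

theorem posSemidef_exp_of_isHermitian {A : Matrix m m ℝ} (hA : A.IsHermitian) :
    (exp A).PosSemidef := by
  have h := posSemidef_conjTranspose_mul_self (exp ((2⁻¹ : ℝ) • A))
  have h2 : ((2⁻¹ : ℝ) • A).IsHermitian := hA.smul (IsSelfAdjoint.all _)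
  rw [h2.exp.eq, ← Matrix.exp_add_of_commute _ _ (Commute.refl _), ← add_smul] at h
  norm_num at h
  exact h

open Filter Topology in
open scoped Matrix.Norms.Operator in
/-- Concavity and monotonicity of `t ↦ tr exp (H + log t • P)` for a rank-one projection `P`,
a special case of Lieb's theorem. -/
theorem trace_exp_add_smul_projection_convexComb_le [Nonempty m] {H : Matrix m m ℝ}
    (hH : H.IsHermitian) {u : m → ℝ} (hu : IsIdempotentElem (vecMulVec u u)) {η σ s : ℝ}
    (hη0 : 0 ≤ η) (hη1 : η ≤ 1) (hs : 1 - η + η * Real.exp σ ≤ Real.exp s) :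
    (1 - η) * trace (exp H) + η * trace (exp (H + σ • vecMulVec u u)) ≤
      trace (exp (H + s • vecMulVec u u)) := by
  set P := vecMulVec u u with hP
  have hPh : P.IsHermitian := isHermitian_vecMulVec_self u
  have hlim (a : ℝ) : Tendsto (fun N : ℕ ↦
      trace ((exp ((N : ℝ)⁻¹ • H) * exp ((N : ℝ)⁻¹ • (a • P))) ^ N)) atTop
      (𝓝 (trace (exp (H + a • P)))) :=
    ((Continuous.matrix_trace continuous_id).tendsto _).comp (tendsto_exp_mul_exp_pow H (a • P))
  have h0 := hlim 0
  rw [zero_smul, add_zero] at h0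
  refine le_of_tendsto_of_tendsto ((h0.const_mul (1 - η)).add ((hlim σ).const_mul η)) (hlim s) ?_
  filter_upwards [eventually_ne_atTop 0] with N hN
  set A := exp ((N : ℝ)⁻¹ • H)
  have hA : A.PosSemidef := posSemidef_exp_of_isHermitian (hH.smul (IsSelfAdjoint.all (N : ℝ)⁻¹))
  have hQ : (1 - P).PosSemidef := by
    have := posSemidef_conjTranspose_mul_self (1 - P)
    rwa [(isHermitian_one.sub hPh).eq, hu.one_sub.eq] at this
  obtain ⟨p, hpd, hpc, hp⟩ := exists_polynomial_trace_pow_rankOne_perturbation (A * (1 - P)) u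
    (A *ᵥ u) (fun i ↦ by
      simpa [mulVec_mulVec] using (posSemidef_mul_pow_mul hA hQ i).dotProduct_mulVec_nonneg u) N 0
  have hval (a : ℝ) : trace ((A * exp ((N : ℝ)⁻¹ • (a • P))) ^ N) =
      trace ((A * (1 - P)) ^ N) + p.eval (Real.exp (a / N)) := by
    have := hp (Real.exp (a / N))
    rw [pow_zero, mul_one, add_zero] at this
    have he : exp (((N : ℝ)⁻¹ * a) • P) = 1 + (Real.exp ((N : ℝ)⁻¹ * a) - 1) • P :=
      exp_smul_of_isIdempotentElem hu _
    rw [← this, smul_smul, he, ← mul_vecMulVec, ← hP, inv_mul_eq_div]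
    congr 2
    rw [mul_sub, mul_add, Matrix.mul_smul, sub_smul, one_smul]
    abel
  have key := eval_exp_div_convexComb_le hN hpd hpc hη0 hη1 hs
  have hv0 := hval 0
  rw [zero_smul, zero_div, Real.exp_zero] at hv0
  rw [hv0, hval, hval]
  linarith

theorem exp_mul_sub_one_mul_le {θ r R : ℝ} (hr : 0 ≤ r) (hrR : r ≤ R) (hR : 0 < R) :
    Real.exp (θ * r) - 1 ≤ (Real.exp (θ * R) - 1) / R * r := by
  have h := convexOn_exp.2 (Set.mem_univ 0) (Set.mem_univ (θ * R))
    (sub_nonneg.2 ((div_le_one hR).2 hrR)) (div_nonneg hr hR.le) (by ring)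
  simp only [smul_eq_mul, mul_zero, zero_add, Real.exp_zero, mul_one] at h
  rw [show r / R * (θ * R) = θ * r by field_simp] at h
  have e : (Real.exp (θ * R) - 1) / R * r = r / R * Real.exp (θ * R) - r / R := by ring
  linarith

theorem trace_exp_add_rankOne_convexComb_le [Nonempty m] {H : Matrix m m ℝ}
    (hH : H.IsHermitian) (v : m → ℝ) {η θ R : ℝ} (hR : 0 < R) (hv : v ⬝ᵥ v ≤ R)
    (hη0 : 0 ≤ η) (hη1 : η ≤ 1) :
    (1 - η) * trace (exp H) + η * trace (exp (H + θ • vecMulVec v v)) ≤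
      trace (exp (H + (η * ((Real.exp (θ * R) - 1) / R)) • vecMulVec v v)) := by
  set r := v ⬝ᵥ v with hr
  rcases eq_or_ne r 0 with h0 | h0
  · rw [dotProduct_self_eq_zero.1 (hr.symm.trans h0)]
    simp only [vecMulVec_zero, smul_zero, add_zero]
    linarith
  have hr0 : 0 ≤ r := by rw [hr]; simpa using dotProduct_star_self_nonneg v
  set u := (√r)⁻¹ • v with hu
  have hvu : vecMulVec v v = r • vecMulVec u u := by
    rw [hu, smul_vecMulVec, vecMulVec_smul, smul_smul, smul_smul, mul_assoc,
      ← mul_inv, Real.mul_self_sqrt hr0, mul_inv_cancel₀ h0, one_smul]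
  have hid : IsIdempotentElem (vecMulVec u u) := by
    have : u ⬝ᵥ u = 1 := by
      rw [hu, smul_dotProduct, dotProduct_smul, smul_smul, ← mul_inv, Real.mul_self_sqrt hr0, ← hr,
        smul_eq_mul, inv_mul_cancel₀ h0]
    rw [IsIdempotentElem, vecMulVec_mul_vecMulVec, this, one_smul]
  rw [hvu, smul_smul, smul_smul]
  refine trace_exp_add_smul_projection_convexComb_le hH hid hη0 hη1 ?_
  refine le_trans ?_ (Real.add_one_le_exp _)
  have := mul_le_mul_of_nonneg_left (exp_mul_sub_one_mul_le (θ := θ) hr0 hv hR) hη0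
  linarith

theorem sum_bernoulli_trace_exp_le_fin [Nonempty m] {η θ R : ℝ} (hR : 0 < R)
    (hη0 : 0 ≤ η) (hη1 : η ≤ 1) (k : ℕ) : ∀ (v : Fin k → m → ℝ), (∀ e, v e ⬝ᵥ v e ≤ R) →
    ∀ H : Matrix m m ℝ, H.IsHermitian →
    ∑ f : Fin k → Bool, (∏ e, if f e then η else 1 - η) *
      trace (exp (H + ∑ e, (if f e then θ else 0) • vecMulVec (v e) (v e))) ≤
    trace (exp (H + ∑ e, (η * ((Real.exp (θ * R) - 1) / R)) • vecMulVec (v e) (v e))) := by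
  induction k with
  | zero => intro v _ H _; simp
  | succ k ih =>
    intro v hv H hH
    rw [← (Fin.consEquiv fun _ ↦ Bool).sum_comp, Fintype.sum_prod_type, Fintype.sum_bool]
    simp only [Fin.consEquiv_apply, Fin.prod_univ_succ, Fin.sum_univ_succ, Fin.cons_zero,
      Fin.cons_succ, if_true, Bool.false_eq_true, if_false, zero_smul, zero_add, mul_assoc,
      ← mul_sum, ← add_assoc H]
    have hP := isHermitian_vecMulVec_self (v 0)
    have h1 := ih (fun e ↦ v e.succ) (fun e ↦ hv _) (H + θ • vecMulVec (v 0) (v 0))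
      (hH.add (hP.smul (IsSelfAdjoint.all _)))
    have h0 := ih (fun e ↦ v e.succ) (fun e ↦ hv _) H hH
    have hs := trace_exp_add_rankOne_convexComb_le (θ := θ)
      (hH.add (isHermitian_sum_smul_vecMulVec univ
        (fun _ ↦ η * ((Real.exp (θ * R) - 1) / R)) fun e ↦ v (Fin.succ e))) (v 0) hR (hv 0) hη0 hη1
    rw [add_right_comm, add_right_comm H _ ((η * _) • _)] at hs
    have h1' := mul_le_mul_of_nonneg_left h1 hη0
    have h0' := mul_le_mul_of_nonneg_left h0 (sub_nonneg.2 hη1)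
    linarith

/-- The matrix Laplace transform bound for a Bernoulli sum of rank-one matrices. -/
theorem sum_bernoulli_trace_exp_le {E : Type*} [Fintype E] [DecidableEq E] [Nonempty m] {η θ R : ℝ}
    (hR : 0 < R) (hη0 : 0 ≤ η) (hη1 : η ≤ 1) (v : E → m → ℝ) (hv : ∀ e, v e ⬝ᵥ v e ≤ R) :
    ∑ f : E → Bool, (∏ e, if f e then η else 1 - η) *
      trace (exp (∑ e, (if f e then θ else 0) • vecMulVec (v e) (v e))) ≤
    trace (exp (∑ e, (η * ((Real.exp (θ * R) - 1) / R)) • vecMulVec (v e) (v e))) := by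
  let φ := Fintype.equivFin E
  have h := sum_bernoulli_trace_exp_le_fin (θ := θ) hR hη0 hη1 _ (v ∘ φ.symm) (fun e ↦ hv _) 0
    isHermitian_zero
  simp only [zero_add] at h
  rw [← (φ.arrowCongr (Equiv.refl Bool)).sum_comp] at h
  simpa [← φ.sum_comp, ← φ.prod_comp] using h

theorem trace_exp_eq_sum_exp_eigenvalues {A : Matrix m m ℝ} (hA : A.IsHermitian) :
    trace (exp A) = ∑ i, Real.exp (hA.eigenvalues i) := by
  have hU : (hA.eigenvectorUnitary : Matrix m m ℝ)⁻¹ = star (hA.eigenvectorUnitary : Matrix m m ℝ) :=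
    inv_eq_left_inv (Unitary.coe_star_mul_self _)
  have hu : IsUnit (hA.eigenvectorUnitary : Matrix m m ℝ) :=
    (Unitary.toUnits hA.eigenvectorUnitary).isUnit
  conv_lhs => rw [hA.spectral_theorem, Unitary.conjStarAlgAut_apply, ← hU,
    Matrix.exp_conj _ _ hu, trace_mul_cycle, nonsing_inv_mul _ ((isUnit_iff_isUnit_det _).1 hu),
    one_mul, exp_diagonal, trace_diagonal]
  simp [Pi.coe_exp, Real.exp_eq_exp_ℝ]

theorem trace_exp_le_of_isHermitian {A : Matrix m m ℝ} (hA : A.IsHermitian) {c : ℝ}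
    (h : ∀ x : m → ℝ, x ⬝ᵥ (A *ᵥ x) ≤ c * (x ⬝ᵥ x)) :
    trace (exp A) ≤ Fintype.card m * Real.exp c := by
  rw [trace_exp_eq_sum_exp_eigenvalues hA, ← nsmul_eq_mul]
  refine sum_le_card_nsmul _ _ _ fun i _ ↦ Real.exp_le_exp.2 ?_
  have h1 := h (hA.eigenvectorBasis i)
  rw [hA.mulVec_eigenvectorBasis, dotProduct_smul, smul_eq_mul] at h1
  have h2 : (hA.eigenvectorBasis i : m → ℝ) ⬝ᵥ (hA.eigenvectorBasis i : m → ℝ) = 1 := by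
    have := hA.eigenvectorBasis.orthonormal.1 i
    rw [EuclideanSpace.norm_eq, Real.sqrt_eq_one] at this
    simpa [dotProduct, sq] using this
  rwa [h2, mul_one, mul_one] at h1

theorem exp_le_trace_exp_of_isHermitian {A : Matrix m m ℝ} (hA : A.IsHermitian) {c : ℝ}
    {y : m → ℝ} (hy : y ≠ 0) (h : c * (y ⬝ᵥ y) ≤ y ⬝ᵥ (A *ᵥ y)) :
    Real.exp c ≤ trace (exp A) := by
  set U := (hA.eigenvectorUnitary : Matrix m m ℝ) with hU
  have hUU : U * star U = 1 := Unitary.coe_mul_star_self _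
  set z := star U *ᵥ y with hz
  have hyz : y = U *ᵥ z := by rw [hz, mulVec_mulVec, hUU, one_mulVec]
  have hdot (w : m → ℝ) : w ⬝ᵥ y = (star U *ᵥ w) ⬝ᵥ z := by
    rw [hyz, dotProduct_mulVec, ← mulVec_transpose, star_eq_conjTranspose,
      conjTranspose_eq_transpose_of_trivial]
  have hyy : y ⬝ᵥ y = ∑ i, z i * z i := by
    rw [hdot]; rfl
  have hyA : y ⬝ᵥ (A *ᵥ y) = ∑ i, hA.eigenvalues i * (z i * z i) := by
    have hAy : star U *ᵥ (A *ᵥ y) = diagonal hA.eigenvalues *ᵥ z := by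
      conv_lhs => rw [hA.spectral_theorem, Unitary.conjStarAlgAut_apply, ← hU]
      rw [hz, mulVec_mulVec, mulVec_mulVec, ← mul_assoc, ← mul_assoc,
        show star U * U = 1 from Unitary.coe_star_mul_self _, one_mul]
      rfl
    rw [dotProduct_comm, hdot, hAy]
    exact sum_congr rfl fun i _ ↦ by rw [mulVec_diagonal, mul_assoc]
  obtain ⟨i, hi⟩ : ∃ i, c ≤ hA.eigenvalues i := by
    by_contra! hlt
    obtain ⟨j, hj⟩ : ∃ j, z j ≠ 0 := by
      by_contra! h0
      exact hy (by rw [hyz, show z = 0 from funext h0, mulVec_zero])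
    rw [hyy, hyA, mul_sum] at h
    refine h.not_gt (sum_lt_sum (fun i _ ↦ mul_le_mul_of_nonneg_right (hlt i).le
      (mul_self_nonneg _)) ⟨j, mem_univ j, mul_lt_mul_of_pos_right (hlt j) ?_⟩)
    exact mul_self_pos.2 hj
  rw [trace_exp_eq_sum_exp_eigenvalues hA]
  exact (Real.exp_le_exp.2 hi).trans
    (single_le_sum (f := fun i ↦ Real.exp (hA.eigenvalues i)) (fun _ _ ↦ (Real.exp_pos _).le)
      (mem_univ i))

end TraceExp

section Chernoff

theorem sq_div_three_le_mul_log_sub {δ : ℝ} (h0 : 0 ≤ δ) (h1 : δ ≤ 1) :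
    δ ^ 2 / 3 ≤ (1 + δ) * Real.log (1 + δ) - δ := by
  have h := mul_le_mul_of_nonneg_left (Real.le_log_one_add_of_nonneg h0) (by linarith : 0 ≤ 1 + δ)
  have e : (1 + δ) * (2 * δ / (δ + 2)) - δ = δ ^ 2 / (δ + 2) := by
    field_simp; ring
  have h3 : δ ^ 2 / 3 ≤ δ ^ 2 / (δ + 2) := by gcongr; linarith
  linarith

variable {m E : Type*} [Fintype m] [Fintype E]

theorem dotProduct_sum_smul_vecMulVec_mulVec {ι : Type*} (s : Finset ι) (c : ι → ℝ)
    (v : ι → m → ℝ) (x : m → ℝ) :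
    x ⬝ᵥ ((∑ e ∈ s, c e • vecMulVec (v e) (v e)) *ᵥ x) = ∑ e ∈ s, c e * (v e ⬝ᵥ x) ^ 2 := by
  rw [sum_mulVec, dotProduct_sum]
  refine sum_congr rfl fun e _ ↦ ?_
  rw [smul_mulVec, vecMulVec_mulVec, dotProduct_smul, op_smul_eq_smul, dotProduct_smul,
    dotProduct_comm x, smul_eq_mul, smul_eq_mul, sq]

theorem prod_ite_bernoulli_nonneg {η : ℝ} (hη0 : 0 ≤ η) (hη1 : η ≤ 1) (f : E → Bool) :
    0 ≤ ∏ e, if f e then η else 1 - η :=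
  prod_nonneg fun e _ ↦ by split_ifs <;> linarith

variable [DecidableEq m]

open scoped MatrixOrder in
theorem exists_isUnit_transpose_mul_self_eq {M : Matrix m m ℝ} (hM : M.PosDef) :
    ∃ B : Matrix m m ℝ, IsUnit B ∧ M = Bᵀ * B := by
  obtain ⟨B, hB, h⟩ := CStarAlgebra.isStrictlyPositive_iff_eq_star_mul_self.1 hM.isStrictlyPositive
  exact ⟨B, hB, by rwa [star_eq_conjTranspose, conjTranspose_eq_transpose_of_trivial] at h⟩

variable [DecidableEq E]

theorem sum_prod_ite_bernoulli (η : ℝ) :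
    ∑ f : E → Bool, ∏ e, (if f e then η else 1 - η) = 1 := by
  have h := prod_univ_sum (fun _ : E ↦ (univ : Finset Bool)) fun _ b ↦ if b then η else 1 - η
  rw [Fintype.piFinset_univ] at h
  rw [← h]
  simp

/-- Upper-tail matrix Chernoff bound for Bernoulli sums of rank-one quadratic forms, relative to
a positive definite form `M`. -/
theorem sum_bernoulli_exists_lt_le [Nonempty m] {M : Matrix m m ℝ} (hM : M.PosDef)
    {R η δ : ℝ} (hR : 0 < R) (hη0 : 0 ≤ η) (hη1 : η ≤ 1) (hδ0 : 0 ≤ δ) (hδ1 : δ ≤ 1)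
    (χ : E → m → ℝ) (hχ : ∀ e x, (χ e ⬝ᵥ x) ^ 2 ≤ R * (x ⬝ᵥ (M *ᵥ x)))
    (hsum : ∀ x, ∑ e, (χ e ⬝ᵥ x) ^ 2 ≤ x ⬝ᵥ (M *ᵥ x)) :
    ∑ f : E → Bool, (if ∃ x, η * (1 + δ) * (x ⬝ᵥ (M *ᵥ x)) <
        ∑ e, (if f e then (χ e ⬝ᵥ x) ^ 2 else 0)
      then ∏ e, (if f e then η else 1 - η) else 0) ≤
    Fintype.card m * Real.exp (-(η * δ ^ 2 / (3 * R))) := by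
  obtain ⟨B, hB, hMB⟩ := exists_isUnit_transpose_mul_self_eq hM
  have hdet := (isUnit_iff_isUnit_det B).1 hB
  have hMx (x : m → ℝ) : x ⬝ᵥ (M *ᵥ x) = (B *ᵥ x) ⬝ᵥ (B *ᵥ x) := by
    rw [hMB, ← mulVec_mulVec, mulVec_transpose, dotProduct_comm, ← dotProduct_mulVec]
  set v : E → m → ℝ := fun e ↦ χ e ᵥ* B⁻¹ with hv
  have hvB (e : E) (x : m → ℝ) : v e ⬝ᵥ (B *ᵥ x) = χ e ⬝ᵥ x := by
    rw [hv, ← dotProduct_mulVec, mulVec_mulVec, nonsing_inv_mul _ hdet, one_mulVec]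
  have hsurj (y : m → ℝ) : ∃ x, y = B *ᵥ x :=
    ⟨B⁻¹ *ᵥ y, by rw [mulVec_mulVec, mul_nonsing_inv _ hdet, one_mulVec]⟩
  have hvR (e : E) : v e ⬝ᵥ v e ≤ R := by
    obtain ⟨x, hx⟩ := hsurj (v e)
    have h := hχ e x
    rw [hMx, ← hvB, ← hx] at h
    rcases (show 0 ≤ v e ⬝ᵥ v e by simpa using dotProduct_star_self_nonneg (v e)).eq_or_lt with
      h0 | h0
    · rw [← h0]; exact hR.le
    · rw [sq] at h; exact le_of_mul_le_mul_right h h0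
  set θ := Real.log (1 + δ) / R with hθ
  have hθ0 : 0 ≤ θ := div_nonneg (Real.log_nonneg (by linarith)) hR.le
  have hκ : (Real.exp (θ * R) - 1) / R = δ / R := by
    rw [hθ, div_mul_cancel₀ _ hR.ne', Real.exp_log (by linarith)]; ring
  have hmain := sum_bernoulli_trace_exp_le (θ := θ) hR hη0 hη1 v hvR
  rw [hκ] at hmain
  have htop : trace (NormedSpace.exp (∑ e, (η * (δ / R)) • vecMulVec (v e) (v e))) ≤
      Fintype.card m * Real.exp (η * (δ / R)) := by
    refine trace_exp_le_of_isHermitian (isHermitian_sum_smul_vecMulVec _ _ _) fun y ↦ ?_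
    rw [dotProduct_sum_smul_vecMulVec_mulVec, ← mul_sum]
    refine mul_le_mul_of_nonneg_left ?_ (by positivity)
    obtain ⟨x, rfl⟩ := hsurj y
    simpa only [hvB, hMx] using hsum x
  have hle : Real.exp (θ * (η * (1 + δ))) *
      ∑ f : E → Bool, (if ∃ x, η * (1 + δ) * (x ⬝ᵥ (M *ᵥ x)) <
        ∑ e, (if f e then (χ e ⬝ᵥ x) ^ 2 else 0)
      then ∏ e, (if f e then η else 1 - η) else 0) ≤
      Fintype.card m * Real.exp (η * (δ / R)) := by
    refine le_trans ?_ (hmain.trans htop)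
    rw [mul_sum]
    refine sum_le_sum fun f _ ↦ ?_
    have hherm := isHermitian_sum_smul_vecMulVec univ (fun e ↦ if f e then θ else 0) v
    have hw := prod_ite_bernoulli_nonneg hη0 hη1 f
    split_ifs with hbad
    · rw [mul_comm]
      refine mul_le_mul_of_nonneg_left ?_ hw
      obtain ⟨x, hx⟩ := hbad
      refine exp_le_trace_exp_of_isHermitian hherm (y := B *ᵥ x) (fun h0 ↦ ?_) ?_
      · simp only [hMx, ← hvB, h0] at hx
        simp at hx
      · rw [dotProduct_sum_smul_vecMulVec_mulVec, mul_assoc, ← hMx]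
        refine (mul_le_mul_of_nonneg_left hx.le hθ0).trans (le_of_eq ?_)
        rw [mul_sum]
        refine sum_congr rfl fun e _ ↦ ?_
        rw [hvB]; split_ifs <;> simp
    · rw [mul_zero]
      exact mul_nonneg hw (posSemidef_exp_of_isHermitian hherm).trace_nonneg
  rw [mul_comm, ← le_div_iff₀ (Real.exp_pos _), mul_div_assoc, ← Real.exp_sub] at hle
  refine hle.trans (mul_le_mul_of_nonneg_left (Real.exp_le_exp.2 ?_) (Nat.cast_nonneg _))
  have h := mul_le_mul_of_nonneg_left (sq_div_three_le_mul_log_sub hδ0 hδ1)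
    (div_nonneg hη0 hR.le)
  have e1 : η / R * (δ ^ 2 / 3) = η * δ ^ 2 / (3 * R) := by field_simp
  have e2 : η / R * ((1 + δ) * Real.log (1 + δ) - δ) = θ * (η * (1 + δ)) - η * (δ / R) := by
    rw [hθ]; field_simp
  linarith

end Chernoff

section Laplacian

theorem two_mul_sum_edgeFinset {V : Type*} [Fintype V] [DecidableEq V] (G : SimpleGraph V)
    [DecidableRel G.Adj] (h : Sym2 V → ℝ) :
    2 * ∑ e ∈ G.edgeFinset, h e = ∑ i, ∑ j, if G.Adj i j then h s(i, j) else 0 := by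
  have h1 : ∑ d : G.Dart, h d.edge = ∑ e ∈ G.edgeFinset, 2 * h e := by
    rw [← sum_fiberwise_of_maps_to (s := univ) (t := G.edgeFinset) (g := fun d : G.Dart ↦ d.edge)
      (fun d _ ↦ mem_edgeFinset.2 d.edge_mem)]
    refine sum_congr rfl fun e he ↦ ?_
    rw [sum_congr rfl fun d hd ↦ by rw [(mem_filter.1 hd).2], sum_const,
      G.dart_edge_fiber_card e (mem_edgeFinset.1 he), nsmul_eq_mul]
    simp
  rw [mul_sum, ← h1, ← Fintype.sum_prod_type', ← sum_filter]
  refine sum_bij (fun d _ ↦ d.toProd) (fun d _ ↦ by simp)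
    (fun d _ d' _ hd ↦ SimpleGraph.Dart.ext _ _ hd)
    (fun p hp ↦ ⟨⟨p, (mem_filter.1 hp).2⟩, mem_univ _, rfl⟩) fun d _ ↦ rfl

variable {n : ℕ} (G : SimpleGraph (Fin n)) [DecidableRel G.Adj]

theorem dotProduct_lapMatrix_mulVec (x : Fin n → ℝ) :
    x ⬝ᵥ (G.lapMatrix ℝ *ᵥ x) = (∑ i, ∑ j, if G.Adj i j then (x i - x j) ^ 2 else 0) / 2 := by
  rw [← G.lapMatrix_toLinearMap₂' ℝ, toLinearMap₂'_apply']

theorem dotProduct_lapMatrix_mulVec_sub_const (x : Fin n → ℝ) (c : ℝ) :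
    (fun i ↦ x i - c) ⬝ᵥ (G.lapMatrix ℝ *ᵥ fun i ↦ x i - c) = x ⬝ᵥ (G.lapMatrix ℝ *ᵥ x) := by
  simp [dotProduct_lapMatrix_mulVec]

theorem edgeLapSym2_mk (a b : Fin n) : edgeLapSym2 s(a, b) =
    vecMulVec (Pi.single a 1 - Pi.single b 1) (Pi.single a 1 - Pi.single b 1) := by
  ext i j
  simp [edgeLapSym2, vecMulVec_apply, Pi.single_apply]

theorem dotProduct_edgeLapSym2_mulVec (a b : Fin n) (x : Fin n → ℝ) :
    x ⬝ᵥ (edgeLapSym2 s(a, b) *ᵥ x) = (x a - x b) ^ 2 := by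
  rw [edgeLapSym2_mk, vecMulVec_mulVec, dotProduct_smul, dotProduct_comm x]
  simp [sub_dotProduct, sq]

theorem isHermitian_edgeLapSym2 (e : Sym2 (Fin n)) : (edgeLapSym2 e).IsHermitian := by
  induction e with
  | _ a b => rw [edgeLapSym2_mk]; exact isHermitian_vecMulVec_self _

theorem sum_dotProduct_edgeLapSym2_mulVec (x : Fin n → ℝ) :
    ∑ e ∈ G.edgeFinset, x ⬝ᵥ (edgeLapSym2 e *ᵥ x) = x ⬝ᵥ (G.lapMatrix ℝ *ᵥ x) := by
  have h := two_mul_sum_edgeFinset G fun e ↦ x ⬝ᵥ (edgeLapSym2 e *ᵥ x)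
  simp only [dotProduct_edgeLapSym2_mulVec] at h
  rw [dotProduct_lapMatrix_mulVec, ← h]
  ring

/-- The Poincaré inequality encoded by the variational description of the spectral gap of the
normalized Laplacian. -/
theorem lam_mul_sum_le_dotProduct_lapMatrix_mulVec {D : Fin n → ℕ} (hDpos : ∀ i, 0 < D i) {lam : ℝ}
    (hlam : ∀ z : Fin n → ℝ, (∑ i, z i * Real.sqrt (D i)) = 0 → (∑ i, (z i) ^ 2) = 1 →
      lam ≤ z ⬝ᵥ ((Matrix.of fun i j =>
          (G.lapMatrix ℝ) i j / (Real.sqrt (D i) * Real.sqrt (D j))) *ᵥ z))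
    (y : Fin n → ℝ) (hy : ∑ i, D i * y i = 0) :
    lam * ∑ i, D i * y i ^ 2 ≤ y ⬝ᵥ (G.lapMatrix ℝ *ᵥ y) := by
  set S := ∑ i, D i * y i ^ 2 with hS
  have hS0 : 0 ≤ S := sum_nonneg fun i _ ↦ by positivity
  rcases hS0.eq_or_lt with h0 | h0
  · rw [← h0, mul_zero]
    simpa using (posSemidef_lapMatrix ℝ G).dotProduct_mulVec_nonneg y
  have hsS : √S ≠ 0 := (Real.sqrt_pos.2 h0).ne'
  have hsD (i) : √(D i : ℝ) ≠ 0 := (Real.sqrt_pos.2 (by exact_mod_cast hDpos i)).ne'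
  have hDD (i) : √(D i : ℝ) * √(D i : ℝ) = D i := Real.mul_self_sqrt (Nat.cast_nonneg _)
  have hSS : √S * √S = S := Real.mul_self_sqrt hS0
  have key := hlam (fun i ↦ √(D i : ℝ) * y i / √S) ?_ ?_
  · have e : (fun i ↦ √(D i : ℝ) * y i / √S) ⬝ᵥ ((Matrix.of fun i j =>
          (G.lapMatrix ℝ) i j / (Real.sqrt (D i) * Real.sqrt (D j))) *ᵥ
          fun i ↦ √(D i : ℝ) * y i / √S) = y ⬝ᵥ (G.lapMatrix ℝ *ᵥ y) / S := by
      simp only [dotProduct, mulVec, mul_sum, sum_div, of_apply]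
      refine sum_congr rfl fun i _ ↦ sum_congr rfl fun j _ ↦ ?_
      have := hsD i
      have := hsD j
      calc _ = y i * (G.lapMatrix ℝ i j * y j) / (√S * √S) := by field_simp
        _ = _ := by rw [hSS]
    rwa [e, le_div_iff₀ h0] at key
  · rw [← zero_div (√S), ← hy, sum_div]
    refine sum_congr rfl fun i _ ↦ ?_
    calc _ = √(D i : ℝ) * √(D i : ℝ) * y i / √S := by ring
      _ = _ := by rw [hDD]
  · rw [← div_self h0.ne']
    conv_rhs => rw [hS, sum_div]
    refine sum_congr rfl fun i _ ↦ ?_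
    rw [div_pow, sq √S, hSS, mul_pow, sq √(D i : ℝ), hDD]

theorem sq_sub_le_mul_dotProduct_lapMatrix_mulVec {D : Fin n → ℕ} (hDpos : ∀ i, 0 < D i)
    {lam : ℝ} {dmin : ℕ} (hdmin : ∀ i, dmin ≤ D i) (hpos : 0 < (dmin : ℝ) * lam)
    (hpoinc : ∀ y : Fin n → ℝ, ∑ i, D i * y i = 0 →
      lam * ∑ i, D i * y i ^ 2 ≤ y ⬝ᵥ (G.lapMatrix ℝ *ᵥ y))
    (x : Fin n → ℝ) (a b : Fin n) :
    (x a - x b) ^ 2 ≤ 2 / (dmin * lam) * (x ⬝ᵥ (G.lapMatrix ℝ *ᵥ x)) := by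
  have hlam0 : 0 < lam := pos_of_mul_pos_right hpos (Nat.cast_nonneg _)
  have hL0 : 0 ≤ x ⬝ᵥ (G.lapMatrix ℝ *ᵥ x) := by
    simpa using (posSemidef_lapMatrix ℝ G).dotProduct_mulVec_nonneg x
  rcases eq_or_ne a b with rfl | hab
  · rw [sub_self, zero_pow two_ne_zero]; positivity
  have hT : (0 : ℝ) < ∑ i, (D i : ℝ) :=
    sum_pos (fun i _ ↦ by exact_mod_cast hDpos i) ⟨a, mem_univ a⟩
  set c := (∑ i, D i * x i) / ∑ i, (D i : ℝ) with hc
  have h := hpoinc (fun i ↦ x i - c) (by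
    simp only [mul_sub, sum_sub_distrib, ← sum_mul]
    rw [hc, mul_div_cancel₀ _ hT.ne', sub_self])
  rw [dotProduct_lapMatrix_mulVec_sub_const] at h
  have h1 : dmin * ((x a - c) ^ 2 + (x b - c) ^ 2) ≤ ∑ i, D i * (x i - c) ^ 2 := by
    rw [← sum_pair (f := fun i ↦ (x i - c) ^ 2) hab, mul_sum]
    refine (sum_le_sum fun i _ ↦ ?_).trans
      (sum_le_sum_of_subset_of_nonneg (subset_univ _) fun i _ _ ↦ by positivity)
    exact mul_le_mul_of_nonneg_right (by exact_mod_cast hdmin i) (sq_nonneg _)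
  have h2 := (mul_le_mul_of_nonneg_left h1 hlam0.le).trans h
  rw [div_mul_eq_mul_div, le_div_iff₀ hpos]
  have h3 : (x a - x b) ^ 2 ≤ 2 * ((x a - c) ^ 2 + (x b - c) ^ 2) := by
    nlinarith [sq_nonneg (x a - c + (x b - c))]
  have h4 := mul_le_mul_of_nonneg_right h3 hpos.le
  linarith

theorem dotProduct_lapMatrix_add_vecMulVec_one_mulVec (x : Fin n → ℝ) :
    x ⬝ᵥ ((G.lapMatrix ℝ + vecMulVec 1 1) *ᵥ x) =
      x ⬝ᵥ (G.lapMatrix ℝ *ᵥ x) + (∑ i, x i) ^ 2 := by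
  rw [add_mulVec, dotProduct_add, vecMulVec_mulVec, dotProduct_smul, op_smul_eq_smul,
    one_dotProduct, dotProduct_one, smul_eq_mul, sq]

theorem posDef_lapMatrix_add_vecMulVec_one {R : ℝ}
    (hres : ∀ (x : Fin n → ℝ) (a b : Fin n),
      (x a - x b) ^ 2 ≤ R * (x ⬝ᵥ (G.lapMatrix ℝ *ᵥ x))) :
    (G.lapMatrix ℝ + vecMulVec 1 1).PosDef := by
  refine .of_dotProduct_mulVec_pos
    ((posSemidef_lapMatrix ℝ G).isHermitian.add (isHermitian_vecMulVec_self _)) fun x hx ↦ ?_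
  rw [star_trivial, dotProduct_lapMatrix_add_vecMulVec_one_mulVec]
  have hL0 : 0 ≤ x ⬝ᵥ (G.lapMatrix ℝ *ᵥ x) := by
    simpa using (posSemidef_lapMatrix ℝ G).dotProduct_mulVec_nonneg x
  by_contra! hle
  have hL : x ⬝ᵥ (G.lapMatrix ℝ *ᵥ x) = 0 := by linarith [sq_nonneg (∑ i, x i)]
  have hS : ∑ i, x i = 0 := pow_eq_zero_iff two_ne_zero |>.1 <|
    le_antisymm (by linarith) (sq_nonneg _)
  refine hx (funext fun a ↦ ?_)
  have hconst (b : Fin n) : x b = x a := by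
    have := hres x b a
    rw [hL, mul_zero] at this
    exact sub_eq_zero.1 (pow_eq_zero_iff two_ne_zero |>.1 (le_antisymm this (sq_nonneg _)))
  rw [sum_congr rfl fun b _ ↦ hconst b, sum_const, card_univ, Fintype.card_fin, nsmul_eq_mul,
    mul_eq_zero] at hS
  exact hS.resolve_left (by exact_mod_cast (Fin.pos a).ne')

end Laplacian

theorem stmt_3 {n : ℕ} (hn : 2 ≤ n) (G : SimpleGraph (Fin n)) [DecidableRel G.Adj]
    (s : Fin n → ℕ) (D : Fin n → ℕ) (hD : ∀ i, D i = G.degree i + s i)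
    (hDpos : ∀ i, 0 < D i)
    (dmin : ℕ) (hdmin : IsLeast (Set.range D) dmin)
    -- `lam` is the second-smallest eigenvalue of `L̃_G = D^{−1/2} L_G D^{−1/2}`:
    -- the minimum of the Rayleigh quotient over unit vectors orthogonal to `D^{1/2}·1`,
    -- the eigenvector of the smallest eigenvalue `0`.
    (lam : ℝ)
    (hlam : IsLeast {r : ℝ | ∃ z : Fin n → ℝ,
        (∑ i, z i * Real.sqrt (D i)) = 0 ∧ (∑ i, (z i) ^ 2) = 1 ∧
        r = z ⬝ᵥ ((Matrix.of fun i j =>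
          (G.lapMatrix ℝ) i j / (Real.sqrt (D i) * Real.sqrt (D j))) *ᵥ z)} lam)
    (η : ℝ) (hη : η ∈ Set.Ioo (0 : ℝ) 1)
    (hgap : (dmin : ℝ) * lam > (18 / η) * Real.log n)
    (δ : ℝ) (hδ : δ = Real.sqrt (18 * Real.log n / (η * dmin * lam))) :
    1 - 1 / (n : ℝ) ^ 2 ≤
      ∑ f : {e : Sym2 (Fin n) // e ∈ G.edgeFinset} → Bool,
        if ((η * (1 + δ)) • G.lapMatrix ℝ -
              ∑ e ∈ G.edgeFinset.attach, (if f e then edgeLapSym2 e.1 else 0)).PosSemidef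
        then ∏ e : {e : Sym2 (Fin n) // e ∈ G.edgeFinset}, (if f e then η else 1 - η)
        else 0 := by
  have hn0 : (0 : ℝ) < n := by positivity
  have hlog : 0 < Real.log n := Real.log_pos (by exact_mod_cast hn)
  obtain ⟨hη0, hη1⟩ := hη
  have hpos : 0 < (dmin : ℝ) * lam := lt_trans (by positivity) hgap
  have : Nonempty (Fin n) := ⟨⟨0, by omega⟩⟩
  have hδ0 : 0 ≤ δ := hδ ▸ Real.sqrt_nonneg _
  have hδsq : δ ^ 2 = 18 * Real.log n / (η * (dmin * lam)) := by
    rw [hδ, mul_assoc η, Real.sq_sqrt (by positivity)]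
  have hδ1 : δ ≤ 1 := by
    refine (sq_le_one_iff₀ hδ0).1 ?_
    rw [hδsq, div_le_one (by positivity)]
    rw [gt_iff_lt, div_mul_eq_mul_div, div_lt_iff₀ hη0] at hgap
    linarith
  have hres := sq_sub_le_mul_dotProduct_lapMatrix_mulVec G hDpos
    (fun i ↦ hdmin.2 (Set.mem_range_self i)) hpos
    (lam_mul_sum_le_dotProduct_lapMatrix_mulVec G hDpos
      fun z h0 h1 ↦ hlam.2 ⟨z, h0, h1, rfl⟩)
  set M := G.lapMatrix ℝ + vecMulVec 1 1 with hM
  have hMx (x : Fin n → ℝ) : x ⬝ᵥ (M *ᵥ x) = x ⬝ᵥ (G.lapMatrix ℝ *ᵥ x) + (∑ i, x i) ^ 2 :=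
    dotProduct_lapMatrix_add_vecMulVec_one_mulVec G x
  have hMpos : M.PosDef := posDef_lapMatrix_add_vecMulVec_one G hres
  have hends (e : Sym2 (Fin n)) : ∃ a b, e = s(a, b) := by
    induction e with
    | _ a b => exact ⟨a, b, rfl⟩
  choose a b hab using hends
  set χ : {e : Sym2 (Fin n) // e ∈ G.edgeFinset} → Fin n → ℝ :=
    fun e ↦ Pi.single (a e) 1 - Pi.single (b e) 1 with hχ
  have hχx (e : {e : Sym2 (Fin n) // e ∈ G.edgeFinset}) (x : Fin n → ℝ) :
      χ e ⬝ᵥ x = x (a e) - x (b e) := by simp [hχ, sub_dotProduct]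
  have hχL (e : {e : Sym2 (Fin n) // e ∈ G.edgeFinset}) (x : Fin n → ℝ) :
      x ⬝ᵥ (edgeLapSym2 e.1 *ᵥ x) = (χ e ⬝ᵥ x) ^ 2 := by
    conv_lhs => rw [hab e.1]
    rw [dotProduct_edgeLapSym2_mulVec, hχx]
  have hform (x : Fin n → ℝ) : ∑ e, (χ e ⬝ᵥ x) ^ 2 = x ⬝ᵥ (G.lapMatrix ℝ *ᵥ x) := by
    rw [← sum_dotProduct_edgeLapSym2_mulVec,
      ← sum_coe_sort G.edgeFinset fun e ↦ x ⬝ᵥ (edgeLapSym2 e *ᵥ x)]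
    exact sum_congr rfl fun e _ ↦ (hχL e x).symm
  have hR : 0 < 2 / ((dmin : ℝ) * lam) := by positivity
  have hbad := sum_bernoulli_exists_lt_le hMpos hR hη0.le hη1.le hδ0 hδ1 χ
    (fun e x ↦ by
      rw [hχx, hMx]
      exact (hres x _ _).trans (mul_le_mul_of_nonneg_left
        (le_add_of_nonneg_right (sq_nonneg _)) hR.le))
    (fun x ↦ by
      rw [hMx, hform]
      exact le_add_of_nonneg_right (sq_nonneg _))
  have hexp : Fintype.card (Fin n) * Real.exp (-(η * δ ^ 2 / (3 * (2 / ((dmin : ℝ) * lam))))) =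
      1 / (n : ℝ) ^ 2 := by
    rw [show η * δ ^ 2 / (3 * (2 / ((dmin : ℝ) * lam))) = (3 : ℕ) * Real.log n by
      rw [hδsq]
      generalize (dmin : ℝ) * lam = t at hpos
      field_simp
      norm_num, Real.exp_neg, Real.exp_nat_mul, Real.exp_log hn0,
      Fintype.card_fin]
    field_simp
  rw [hexp] at hbad
  have hone := sum_prod_ite_bernoulli (E := {e : Sym2 (Fin n) // e ∈ G.edgeFinset}) η
  rw [sub_le_iff_le_add]
  refine le_trans (le_trans hone.ge ?_) (add_le_add_right hbad _)
  rw [← sum_add_distrib]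
  refine sum_le_sum fun f _ ↦ ?_
  have hw := prod_ite_bernoulli_nonneg hη0.le hη1.le f
  by_cases hex : ∃ x, η * (1 + δ) * (x ⬝ᵥ (M *ᵥ x)) < ∑ e, (if f e then (χ e ⬝ᵥ x) ^ 2 else 0)
  · rw [if_pos hex]
    refine le_add_of_nonneg_left ?_
    split_ifs
    exacts [hw, le_rfl]
  · rw [if_neg hex, if_pos, add_zero]
    push Not at hex
    have hherm : IsSelfAdjoint
        (∑ e ∈ G.edgeFinset.attach, (if f e then edgeLapSym2 e.1 else 0)) := by
      refine isSelfAdjoint_sum _ fun e _ ↦ ?_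
      split_ifs
      exacts [isHermitian_edgeLapSym2 _, isHermitian_zero]
    refine .of_dotProduct_mulVec_nonneg
      (((posSemidef_lapMatrix ℝ G).isHermitian.smul (IsSelfAdjoint.all _)).sub hherm) fun x ↦ ?_
    have h := hex fun i ↦ x i - (∑ j, x j) / n
    have hzero : ∑ i, (x i - (∑ j, x j) / n) = 0 := by
      rw [sum_sub_distrib, sum_const, card_univ, Fintype.card_fin, nsmul_eq_mul,
        mul_div_cancel₀ _ hn0.ne', sub_self]
    rw [hMx, hzero, zero_pow two_ne_zero, add_zero, dotProduct_lapMatrix_mulVec_sub_const] at h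
    rw [star_trivial, sub_mulVec, dotProduct_sub, smul_mulVec, dotProduct_smul, smul_eq_mul,
      sub_nonneg, sum_mulVec, dotProduct_sum]
    refine le_trans (le_of_eq ?_) h
    rw [univ_eq_attach]
    refine sum_congr rfl fun e _ ↦ ?_
    split_ifs
    · rw [hχL, hχx, hχx, sub_sub_sub_cancel_right]
    · simp
end

section
/- There exist universal constants B > 0 and C > 0 such that the following holds. Let n ≥ 2 and let G be a finite graph on vertex set V = {1,…,n} given by a finite edge-index set E together with endpoint maps assigning to each e ∈ E an unordered pair of distinct vertices (parallel edges allowed); let L_e denote the Laplacian of the single edge e and L_G = Σ_{e∈E} L_e. Let s : V → ℕ and let D be the diagonal matrix with D_vv = deg(v) + s_v, where deg(v) counts edges of E incident to v with multiplicity; assume D_vv > 0 for all v, let d_min = min_v D_vv, and let λ > 0 be the second-smallest eigenvalue of D^{−1/2} L_G D^{−1/2}. Let m₁, m₂ ∈ ℕ, let Δ ≥ 1, and let e ↦ (c₁(e), c₂(e)) ∈ [m₁]×[m₂] be an injective map such that for every i ∈ [m₁] each vertex is incident to at most Δ edges e with c₁(e) = i, and for every j ∈ [m₂] each vertex is incident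 to at most Δ edges e with c₂(e) = j. Let η ∈ [0,1/2) and let ξ¹₁,…,ξ¹_{m₁}, ξ²₁,…,ξ²_{m₂} be independent random signs, each equal to −1 with probability η and +1 otherwise. Let H = {e ∈ E : ξ¹_{c₁(e)}·ξ²_{c₂(e)} = −1} and L_H = Σ_{e∈H} L_e. If d_min·λ ≥ B·Δ·log n, then with probability at least 1 − C/n², L_H ⪯ max((1+δ)·2η(1−η), 1/3)·L_G, where δ = sqrt(B·Δ·log n/(d_min·λ)). -/
open Finset Matrix
open scoped Classical

/-- The Laplacian of the single edge `{a,b}`: `(χ_a − χ_b)(χ_a − χ_b)ᵀ`. -/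
noncomputable def edgeLapV {V : Type} [DecidableEq V] (a b : V) : Matrix V V ℝ :=
  Matrix.of fun i j =>
    ((if i = a then (1 : ℝ) else 0) - (if i = b then 1 else 0)) *
      ((if j = a then (1 : ℝ) else 0) - (if j = b then 1 else 0))

/-- The value of a random sign: `true` encodes `−1`, `false` encodes `+1`. -/
noncomputable def sgn (b : Bool) : ℝ := if b then -1 else 1

/-- A real symmetric matrix is orthogonally diagonalizable. -/
lemma exists_orthogonal_diagonalization {ι : Type*} [Fintype ι] [DecidableEq ι]
    {A : Matrix ι ι ℝ} (hA : A.IsHermitian) :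
    ∃ (U : Matrix ι ι ℝ) (a : ι → ℝ), Uᵀ * U = 1 ∧ U * Uᵀ = 1 ∧ A = U * diagonal a * Uᵀ := by
  refine ⟨hA.eigenvectorUnitary, hA.eigenvalues, ?_, ?_, ?_⟩
  · have := Unitary.coe_star_mul_self hA.eigenvectorUnitary
    rwa [star_eq_conjTranspose, conjTranspose_eq_transpose_of_trivial] at this
  · have := Unitary.coe_mul_star_self hA.eigenvectorUnitary
    rwa [Unitary.coe_star, star_eq_conjTranspose, conjTranspose_eq_transpose_of_trivial] at this
  · have := hA.spectral_theorem
    rw [Unitary.conjStarAlgAut_apply, star_eq_conjTranspose,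
      conjTranspose_eq_transpose_of_trivial] at this
    exact this

lemma orthogonal_conj_diagonal_pow {ι : Type*} [Fintype ι] [DecidableEq ι]
    {U : Matrix ι ι ℝ} (a : ι → ℝ) (hU : Uᵀ * U = 1) (hU' : U * Uᵀ = 1) (k : ℕ) :
    (U * diagonal a * Uᵀ) ^ k = U * diagonal (fun i => a i ^ k) * Uᵀ := by
  induction k with
  | zero => simp [hU']
  | succ k ih =>
    rw [pow_succ, ih]
    calc U * diagonal (fun i => a i ^ k) * Uᵀ * (U * diagonal a * Uᵀ)
        = U * diagonal (fun i => a i ^ k) * (Uᵀ * U) * diagonal a * Uᵀ := by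
          simp only [Matrix.mul_assoc]
      _ = U * diagonal (fun i => a i ^ (k + 1)) * Uᵀ := by
          rw [hU, Matrix.mul_one, Matrix.mul_assoc U, diagonal_mul_diagonal]
          simp only [pow_succ]

lemma posSemidef_transpose_conj {ι κ : Type*} [Fintype ι] [Fintype κ] {A : Matrix ι ι ℝ}
    (hA : A.PosSemidef) (T : Matrix ι κ ℝ) : (Tᵀ * A * T).PosSemidef := by
  simpa [conjTranspose_eq_transpose_of_trivial] using hA.conjTranspose_mul_mul_same T

/-- A symmetric matrix is bounded above by a scalar iff its eigenvalues are. -/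
lemma posSemidef_smul_one_sub_iff {ι : Type*} [Fintype ι] [DecidableEq ι]
    {U : Matrix ι ι ℝ} (a : ι → ℝ) (hU : Uᵀ * U = 1) (hU' : U * Uᵀ = 1) (c : ℝ) :
    (c • (1 : Matrix ι ι ℝ) - U * diagonal a * Uᵀ).PosSemidef ↔ ∀ i, a i ≤ c := by
  have hd : c • (1 : Matrix ι ι ℝ) - diagonal a = diagonal (fun i => c - a i) := by
    rw [smul_one_eq_diagonal, diagonal_sub]
  constructor
  · intro h i
    have h' := posSemidef_transpose_conj h U
    have he : Uᵀ * (c • (1 : Matrix ι ι ℝ) - U * diagonal a * Uᵀ) * U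
        = diagonal (fun i => c - a i) := by
      rw [← hd, Matrix.mul_sub, Matrix.sub_mul, Matrix.mul_smul, Matrix.smul_mul, Matrix.mul_one,
        hU]
      congr 1
      calc Uᵀ * (U * diagonal a * Uᵀ) * U = (Uᵀ * U) * diagonal a * (Uᵀ * U) := by
            simp only [Matrix.mul_assoc]
        _ = diagonal a := by rw [hU, Matrix.one_mul, Matrix.mul_one]
    rw [he, posSemidef_diagonal_iff] at h'
    linarith [h' i]
  · intro h
    have h' : (diagonal (fun i => c - a i)).PosSemidef :=
      posSemidef_diagonal_iff.2 fun i => by linarith [h i]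
    have h2 := posSemidef_transpose_conj h' Uᵀ
    rwa [← hd, Matrix.mul_sub, Matrix.sub_mul, Matrix.mul_smul, Matrix.smul_mul, Matrix.mul_one,
      transpose_transpose, hU'] at h2

lemma posSemidef_sub_smul_one_iff {ι : Type*} [Fintype ι] [DecidableEq ι]
    {U : Matrix ι ι ℝ} (a : ι → ℝ) (hU : Uᵀ * U = 1) (hU' : U * Uᵀ = 1) (c : ℝ) :
    (U * diagonal a * Uᵀ - c • (1 : Matrix ι ι ℝ)).PosSemidef ↔ ∀ i, c ≤ a i := by
  have h := posSemidef_smul_one_sub_iff (fun i => -a i) hU hU' (-c)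
  have hd : diagonal (fun i => -a i) = -diagonal a := (diagonal_neg a).symm
  rw [hd, Matrix.mul_neg, Matrix.neg_mul, neg_smul, sub_neg_eq_add, neg_add_eq_sub] at h
  simpa using h

/-- Joint spectral expansion of `tr (A ^ k * B ^ l)` for symmetric matrices. -/
lemma trace_pow_mul_pow_diagonalized {ι : Type*} [Fintype ι] [DecidableEq ι]
    {U V : Matrix ι ι ℝ} (a b : ι → ℝ) (hU : Uᵀ * U = 1) (hU' : U * Uᵀ = 1)
    (hV : Vᵀ * V = 1) (hV' : V * Vᵀ = 1) (k l : ℕ) :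
    ((U * diagonal a * Uᵀ) ^ k * (V * diagonal b * Vᵀ) ^ l).trace
      = ∑ i, ∑ j, ((Uᵀ * V) i j) ^ 2 * (a i ^ k * b j ^ l) := by
  rw [orthogonal_conj_diagonal_pow a hU hU', orthogonal_conj_diagonal_pow b hV hV']
  have : (U * diagonal (fun i => a i ^ k) * Uᵀ * (V * diagonal (fun i => b i ^ l) * Vᵀ)).trace
      = (diagonal (fun i => a i ^ k) * (Uᵀ * V) * (diagonal (fun i => b i ^ l) * (Uᵀ * V)ᵀ)).trace
      := by
    rw [transpose_mul, transpose_transpose]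
    calc _ = (U * (diagonal (fun i => a i ^ k) * Uᵀ * V * diagonal (fun i => b i ^ l) * Vᵀ)).trace
          := by simp only [Matrix.mul_assoc]
      _ = _ := by rw [Matrix.trace_mul_comm]; simp only [Matrix.mul_assoc]
  rw [this]
  simp only [trace, diag_apply]
  refine Finset.sum_congr rfl fun i _ => ?_
  rw [Matrix.mul_apply]
  refine Finset.sum_congr rfl fun j _ => ?_
  rw [diagonal_mul, diagonal_mul, transpose_apply]
  ring

/-- Convexity of `A ↦ tr (A ^ q)` on positive semidefinite matrices, in gradient form. -/
lemma trace_pow_add_ge {ι : Type*} [Fintype ι] [DecidableEq ι] {A Y : Matrix ι ι ℝ}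
    (hA : A.PosSemidef) (hY : Y.PosSemidef) {q : ℕ} (hq : 1 ≤ q) :
    (A ^ q).trace + q * (A ^ (q - 1) * Y).trace ≤ ((A + Y) ^ q).trace := by
  obtain ⟨B, hB⟩ : ∃ B, B = A + Y := ⟨_, rfl⟩
  have hBp : B.PosSemidef := hB ▸ hA.add hY
  have hYe : Y = B - A := by rw [hB]; abel
  obtain ⟨U, a, hU, hU', hAe⟩ := exists_orthogonal_diagonalization hA.1
  obtain ⟨V, b, hV, hV', hBe⟩ := exists_orthogonal_diagonalization hBp.1
  have ha : ∀ i, 0 ≤ a i := (posSemidef_sub_smul_one_iff a hU hU' 0).1 (by simpa [← hAe] using hA)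
  have hb : ∀ i, 0 ≤ b i := (posSemidef_sub_smul_one_iff b hV hV' 0).1 (by simpa [← hBe] using hBp)
  have key := trace_pow_mul_pow_diagonalized a b hU hU' hV hV'
  rw [← hAe, ← hBe] at key
  have e1 := key q 0
  have e2 := key 0 q
  have e3 := key (q - 1) 1
  rw [pow_zero, Matrix.mul_one] at e1
  rw [pow_zero, Matrix.one_mul] at e2
  rw [pow_one] at e3
  have hAA : A ^ (q - 1) * A = A ^ q := by rw [← pow_succ, Nat.sub_add_cancel hq]
  rw [← hB, hYe, Matrix.mul_sub, trace_sub, hAA, e1, e2, e3, ← Finset.sum_sub_distrib,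
    Finset.mul_sum, ← Finset.sum_add_distrib]
  refine Finset.sum_le_sum fun i _ => ?_
  rw [← Finset.sum_sub_distrib, Finset.mul_sum, ← Finset.sum_add_distrib]
  refine Finset.sum_le_sum fun j _ => ?_
  have hw : 0 ≤ ((Uᵀ * V) i j) ^ 2 := sq_nonneg _
  have hs : a i ^ q + q * (a i ^ (q - 1) * b j - a i ^ q) ≤ b j ^ q := by
    obtain ⟨m, rfl⟩ : ∃ m, q = m + 1 := ⟨q - 1, by omega⟩
    rcases (ha i).eq_or_lt with h0 | h0
    · rw [← h0]
      rcases Nat.eq_zero_or_pos m with rfl | hm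
      · simp
      · simp [hm.ne', pow_nonneg (hb j)]
    · have hB := one_add_mul_le_pow (a := b j / a i - 1)
        (by linarith [div_nonneg (hb j) h0.le]) (m + 1)
      have hp := mul_le_mul_of_nonneg_left hB (pow_nonneg h0.le (m + 1))
      rw [← mul_pow] at hp
      have r1 : a i * (1 + (b j / a i - 1)) = b j := by field_simp; ring
      have r2 : a i ^ (m + 1) * (1 + ((m + 1 : ℕ) : ℝ) * (b j / a i - 1))
          = a i ^ (m + 1) + ((m + 1 : ℕ) : ℝ) * (a i ^ (m + 1 - 1) * b j - a i ^ (m + 1)) := by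
        rw [Nat.add_sub_cancel]; field_simp; ring
      rw [r1, r2] at hp
      exact hp
  calc _ = ((Uᵀ * V) i j) ^ 2 * (a i ^ q + q * (a i ^ (q - 1) * b j - a i ^ q)) := by ring
    _ ≤ ((Uᵀ * V) i j) ^ 2 * b j ^ q := mul_le_mul_of_nonneg_left hs hw
    _ = _ := by ring

lemma trace_mul_pow_comm {ι : Type*} [Fintype ι] [DecidableEq ι] (A B : Matrix ι ι ℝ) (m : ℕ) :
    ((A * B) ^ m).trace = ((B * A) ^ m).trace := by
  cases m with
  | zero => simp
  | succ m =>
    have h : ∀ k : ℕ, A * (B * A) ^ k = (A * B) ^ k * A := by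
      intro k
      induction k with
      | zero => simp
      | succ k ih => rw [pow_succ, ← Matrix.mul_assoc, ih, pow_succ]; simp only [Matrix.mul_assoc]
    rw [pow_succ, ← Matrix.mul_assoc, ← h, Matrix.mul_assoc, Matrix.trace_mul_comm, Matrix.mul_assoc,
      ← pow_succ]

lemma trace_mul_le {ι : Type*} [Fintype ι] (A B : Matrix ι ι ℝ) :
    (A * B).trace ≤ ((A * Aᵀ).trace + (B * Bᵀ).trace) / 2 := by
  have h : 0 ≤ ((A - Bᵀ) * (A - Bᵀ)ᵀ).trace := by
    simp only [trace, diag_apply, Matrix.mul_apply, transpose_apply]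
    exact Finset.sum_nonneg fun i _ => Finset.sum_nonneg fun j _ => mul_self_nonneg _
  rw [transpose_sub, transpose_transpose, Matrix.sub_mul, Matrix.mul_sub, Matrix.mul_sub,
    trace_sub, trace_sub, trace_sub, ← transpose_mul, trace_transpose,
    Matrix.trace_mul_comm Bᵀ B] at h
  linarith

/-- The Lieb–Thirring inequality for exponents that are powers of two, together with the bound
`tr (M ^ (2 * m)) ≤ tr ((M * Mᵀ) ^ m)` it is proved simultaneously with. -/
lemma lieb_thirring_aux {ι : Type*} [Fintype ι] [DecidableEq ι] (k : ℕ) :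
    (∀ M : Matrix ι ι ℝ, (M ^ (2 * 2 ^ k)).trace ≤ ((M * Mᵀ) ^ (2 ^ k)).trace) ∧
    (∀ A B : Matrix ι ι ℝ, A.IsSymm → B.IsSymm →
      ((A * B) ^ (2 ^ k)).trace ≤ (A ^ (2 ^ k) * B ^ (2 ^ k)).trace) := by
  induction k with
  | zero =>
    refine ⟨fun M => ?_, fun A B _ _ => by simp⟩
    simp only [pow_zero, mul_one, pow_one, pow_two]
    linarith [trace_mul_le M M]
  | succ k ih =>
    obtain ⟨ihT, ihS⟩ := ih
    have hpow : ∀ M : Matrix ι ι ℝ, M ^ (2 * 2 ^ (k + 1)) = (M * M) ^ (2 * 2 ^ k) := by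
      intro M
      rw [← pow_two, ← pow_mul]; congr 1; ring
    have hpow' : ∀ M : Matrix ι ι ℝ, M ^ (2 ^ (k + 1)) = (M * M) ^ (2 ^ k) := by
      intro M
      rw [← pow_two, ← pow_mul]; congr 1; ring
    constructor
    · intro M
      have hs1 : (Mᵀ * M).IsSymm := by simp [IsSymm, transpose_mul]
      have hs2 : (M * Mᵀ).IsSymm := by simp [IsSymm, transpose_mul]
      have e : (M * M * (M * M)ᵀ) = M * (M * Mᵀ * Mᵀ) := by
        rw [transpose_mul]; simp only [Matrix.mul_assoc]
      have e' : M * Mᵀ * Mᵀ * M = (M * Mᵀ) * (Mᵀ * M) := by simp only [Matrix.mul_assoc]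
      have hsq : ∀ P : Matrix ι ι ℝ, P.IsSymm →
          P ^ (2 ^ k) * (P ^ (2 ^ k))ᵀ = P ^ (2 ^ (k + 1)) := by
        intro P hP
        rw [transpose_pow, hP.eq, ← pow_add]; congr 1; ring
      calc (M ^ (2 * 2 ^ (k + 1))).trace = ((M * M) ^ (2 * 2 ^ k)).trace := by rw [hpow]
        _ ≤ ((M * M * (M * M)ᵀ) ^ (2 ^ k)).trace := ihT _
        _ = (((M * Mᵀ) * (Mᵀ * M)) ^ (2 ^ k)).trace := by
          rw [e, trace_mul_pow_comm, e']
        _ ≤ ((M * Mᵀ) ^ (2 ^ k) * (Mᵀ * M) ^ (2 ^ k)).trace := ihS _ _ hs2 hs1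
        _ ≤ (((M * Mᵀ) ^ (2 ^ (k + 1))).trace + ((Mᵀ * M) ^ (2 ^ (k + 1))).trace) / 2 := by
          have := trace_mul_le ((M * Mᵀ) ^ (2 ^ k)) ((Mᵀ * M) ^ (2 ^ k))
          rwa [hsq _ hs1, hsq _ hs2] at this
        _ = ((M * Mᵀ) ^ (2 ^ (k + 1))).trace := by
          rw [trace_mul_pow_comm Mᵀ M]; ring
    · intro A B hA hB
      have hA2 : (A * A).IsSymm := by simp [IsSymm, transpose_mul, hA.eq]
      have hB2 : (B * B).IsSymm := by simp [IsSymm, transpose_mul, hB.eq]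
      have e : A * B * (A * B)ᵀ = A * (B * B * A) := by
        rw [transpose_mul, hA.eq, hB.eq]; simp only [Matrix.mul_assoc]
      have e' : B * B * A * A = (B * B) * (A * A) := by simp only [Matrix.mul_assoc]
      calc ((A * B) ^ (2 ^ (k + 1))).trace = ((A * B) ^ (2 * 2 ^ k)).trace := by
            congr 2; ring
        _ ≤ ((A * B * (A * B)ᵀ) ^ (2 ^ k)).trace := ihT _
        _ = ((A * A * (B * B)) ^ (2 ^ k)).trace := by
          rw [e, trace_mul_pow_comm, e', trace_mul_pow_comm]
        _ ≤ ((A * A) ^ (2 ^ k) * (B * B) ^ (2 ^ k)).trace := ihS _ _ hA2 hB2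
        _ = _ := by rw [hpow', hpow']

/-- A positive definite matrix is `Tᵀ * T` with `T` invertible. -/
lemma exists_transpose_mul_self_of_posDef {ι : Type*} [Fintype ι] [DecidableEq ι]
    {A : Matrix ι ι ℝ} (hA : A.PosDef) :
    ∃ T S : Matrix ι ι ℝ, A = Tᵀ * T ∧ T * S = 1 ∧ S * T = 1 := by
  obtain ⟨U, a, hU, hU', hAe⟩ := exists_orthogonal_diagonalization hA.1
  have ha : ∀ i, 0 ≤ a i :=
    (posSemidef_sub_smul_one_iff a hU hU' 0).1 (by simpa [← hAe] using hA.posSemidef)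
  have hT : A = (diagonal (fun i => √(a i)) * Uᵀ)ᵀ * (diagonal (fun i => √(a i)) * Uᵀ) := by
    rw [transpose_mul, transpose_transpose, diagonal_transpose, Matrix.mul_assoc,
      ← Matrix.mul_assoc (diagonal _) (diagonal _), diagonal_mul_diagonal, ← Matrix.mul_assoc]
    simp only [Real.mul_self_sqrt (ha _)]
    exact hAe
  refine ⟨diagonal (fun i => √(a i)) * Uᵀ, A⁻¹ * (diagonal (fun i => √(a i)) * Uᵀ)ᵀ, hT, ?_, ?_⟩
  · rw [mul_eq_one_comm, Matrix.mul_assoc, ← hT]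
    exact Matrix.nonsing_inv_mul _ ((Matrix.isUnit_iff_isUnit_det _).1 hA.isUnit)
  · rw [Matrix.mul_assoc, ← hT]
    exact Matrix.nonsing_inv_mul _ ((Matrix.isUnit_iff_isUnit_det _).1 hA.isUnit)

lemma one_add_pow_le {q : ℕ} {y R : ℝ} (hy : 0 ≤ y) (hyR : y ≤ R) (hqR : q * R ≤ 1) :
    (1 + y) ^ q ≤ 1 + (1 + q * R) * q * y := by
  have hqy : (q : ℝ) * y ≤ q * R := mul_le_mul_of_nonneg_left hyR (Nat.cast_nonneg q)
  have h0 : 0 ≤ (q : ℝ) * y := by positivity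
  have h1 : (1 + y) ^ q ≤ Real.exp (q * y) := by
    rw [Real.exp_nat_mul]
    exact pow_le_pow_left₀ (by linarith) (by linarith [Real.add_one_le_exp y]) q
  have h2 := (abs_le.1 (Real.abs_exp_sub_one_sub_id_le (x := q * y)
    (by rw [abs_of_nonneg h0]; linarith))).2
  nlinarith

/-- First-order upper bound for `tr ((A + X) ^ q)` when `X` is a small perturbation of `A`. -/
lemma trace_pow_add_le {ι : Type*} [Fintype ι] [DecidableEq ι] {A X : Matrix ι ι ℝ} {R : ℝ}
    (hA : (A - 1).PosSemidef) (hX : X.PosSemidef)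
    (hXR : (R • (1 : Matrix ι ι ℝ) - X).PosSemidef) (hR : 0 ≤ R) (k : ℕ)
    (hqR : ((2 ^ k : ℕ) : ℝ) * R ≤ 1) :
    ((A + X) ^ (2 ^ k)).trace ≤ (A ^ (2 ^ k)).trace
      + (1 + ((2 ^ k : ℕ) : ℝ) * R) * ((2 ^ k : ℕ) : ℝ) * (A ^ (2 ^ k - 1) * X).trace := by
  have hAd : A.PosDef := by
    have := PosDef.posSemidef_add hA (PosDef.one (n := ι) (R := ℝ))
    simpa using this
  obtain ⟨T, S, hT, hTS, hST⟩ := exists_transpose_mul_self_of_posDef hAd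
  have hST' : Tᵀ * Sᵀ = 1 := by rw [← transpose_mul, hST, transpose_one]
  have hTS' : Sᵀ * Tᵀ = 1 := by rw [← transpose_mul, hTS, transpose_one]
  obtain ⟨Y, hY⟩ : ∃ Y, Y = Sᵀ * X * S := ⟨_, rfl⟩
  have hYX : Tᵀ * Y * T = X := by
    calc Tᵀ * Y * T = (Tᵀ * Sᵀ) * X * (S * T) := by rw [hY]; simp only [Matrix.mul_assoc]
      _ = X := by rw [hST', hST, Matrix.one_mul, Matrix.mul_one]
  have hYp : Y.PosSemidef := hY ▸ posSemidef_transpose_conj hX S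
  have hYR : (R • (1 : Matrix ι ι ℝ) - Y).PosSemidef := by
    have h1 : (R • A - X).PosSemidef := by
      have := (hA.smul hR).add hXR
      have e : R • (A - 1) + (R • (1 : Matrix ι ι ℝ) - X) = R • A - X := by
        rw [smul_sub]; abel
      rwa [e] at this
    have h2 := posSemidef_transpose_conj h1 S
    have e : Sᵀ * A * S = 1 := by
      calc Sᵀ * A * S = (Sᵀ * Tᵀ) * (T * S) := by rw [hT]; simp only [Matrix.mul_assoc]
        _ = 1 := by rw [hTS', hTS, Matrix.one_mul]
    rwa [Matrix.mul_sub, Matrix.sub_mul, Matrix.mul_smul, Matrix.smul_mul, e, ← hY] at h2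
  obtain ⟨q, hq⟩ : ∃ q, q = 2 ^ k := ⟨_, rfl⟩
  have hq1 : 1 ≤ q := hq ▸ Nat.one_le_two_pow
  have hG : (T * Tᵀ).IsHermitian := by
    simp [IsHermitian, conjTranspose_eq_transpose_of_trivial, transpose_mul]
  have hGp : (T * Tᵀ - (0 : ℝ) • (1 : Matrix ι ι ℝ)).PosSemidef := by
    have := posSemidef_transpose_conj (PosSemidef.one (n := ι) (R := ℝ)) Tᵀ
    simpa using this
  have hYh : (1 + Y).IsHermitian := (PosSemidef.one.add hYp).1
  have hLT : ((A + X) ^ q).trace ≤ ((T * Tᵀ) ^ q * (1 + Y) ^ q).trace := by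
    have e : A + X = Tᵀ * ((1 + Y) * T) := by
      rw [Matrix.add_mul, Matrix.mul_add, Matrix.one_mul, ← hT, ← Matrix.mul_assoc, hYX]
    have h := (lieb_thirring_aux (ι := ι) k).2 (T * Tᵀ) (1 + Y)
      ((conjTranspose_eq_transpose_of_trivial _).symm.trans hG)
      ((conjTranspose_eq_transpose_of_trivial _).symm.trans hYh)
    rw [← hq] at h
    rw [e, trace_mul_pow_comm, Matrix.mul_assoc, trace_mul_pow_comm]
    exact h
  have hswap : ∀ m : ℕ, (T * Tᵀ) ^ m * T = T * A ^ m := by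
    intro m
    induction m with
    | zero => simp
    | succ m ih =>
      rw [pow_succ', Matrix.mul_assoc, ih, pow_succ', hT]; simp only [Matrix.mul_assoc]
  have hAY : ((T * Tᵀ) ^ q * Y).trace = (A ^ (q - 1) * X).trace := by
    have e : (T * Tᵀ) ^ q = T * A ^ (q - 1) * Tᵀ := by
      conv_lhs => rw [← Nat.sub_add_cancel hq1, pow_succ, ← Matrix.mul_assoc, hswap]
    rw [e, Matrix.mul_assoc, Matrix.mul_assoc, Matrix.trace_mul_comm, ← hYX]
    simp only [Matrix.mul_assoc]
  have hAA : ((T * Tᵀ) ^ q).trace = (A ^ q).trace := by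
    rw [trace_mul_pow_comm, ← hT]
  obtain ⟨U, a, hU, hU', hAe⟩ := exists_orthogonal_diagonalization hG
  obtain ⟨V, b, hV, hV', hBe⟩ := exists_orthogonal_diagonalization hYh
  have ha : ∀ i, 0 ≤ a i := (posSemidef_sub_smul_one_iff a hU hU' 0).1 (hAe ▸ hGp)
  have hb : ∀ i, 1 ≤ b i := (posSemidef_sub_smul_one_iff b hV hV' 1).1
    (by rw [← hBe]; simpa using hYp)
  have hb' : ∀ i, b i ≤ 1 + R := (posSemidef_smul_one_sub_iff b hV hV' (1 + R)).1 (by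
    rw [← hBe, add_smul, one_smul, add_sub_add_left_eq_sub]; exact hYR)
  have key := trace_pow_mul_pow_diagonalized a b hU hU' hV hV'
  rw [← hAe, ← hBe] at key
  have e0 := key q 0
  have e1 := key q 1
  have eq := key q q
  rw [pow_zero, Matrix.mul_one, hAA] at e0
  rw [pow_one, Matrix.mul_add, Matrix.mul_one, trace_add, hAY, hAA] at e1
  have e2 : (A ^ (q - 1) * X).trace
      = ∑ i, ∑ j, ((Uᵀ * V) i j) ^ 2 * (a i ^ q * (b j - 1)) := by
    rw [e0] at e1
    rw [eq_sub_of_add_eq' e1, ← Finset.sum_sub_distrib]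
    refine Finset.sum_congr rfl fun i _ => ?_
    rw [← Finset.sum_sub_distrib]
    refine Finset.sum_congr rfl fun j _ => ?_
    ring
  rw [← hq] at hqR ⊢
  refine hLT.trans ?_
  rw [eq, e0, e2, Finset.mul_sum, ← Finset.sum_add_distrib]
  refine Finset.sum_le_sum fun i _ => ?_
  rw [Finset.mul_sum, ← Finset.sum_add_distrib]
  refine Finset.sum_le_sum fun j _ => ?_
  have hs := one_add_pow_le (q := q) (y := b j - 1) (R := R) (by linarith [hb j])
    (by linarith [hb' j]) hqR
  rw [add_sub_cancel] at hs
  have hw : 0 ≤ ((Uᵀ * V) i j) ^ 2 * a i ^ q := mul_nonneg (sq_nonneg _) (pow_nonneg (ha i) q)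
  have := mul_le_mul_of_nonneg_left hs hw
  calc _ = ((Uᵀ * V) i j) ^ 2 * a i ^ q * b j ^ q := by ring
    _ ≤ _ := this
    _ = _ := by ring

/-- Matrix Chernoff moment bound: in `tr ((A + ∑ i, X i (f i)) ^ q)` the independent random
summands may be replaced by slightly inflated expectations. -/
lemma matrix_chernoff_moment {ι : Type*} [Fintype ι] [DecidableEq ι] (k : ℕ) {R : ℝ} (hR : 0 ≤ R)
    (hqR : ((2 ^ k : ℕ) : ℝ) * R ≤ 1) (w : Bool → ℝ) (hw : ∀ b, 0 ≤ w b) (hw1 : ∑ b, w b = 1)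
    (m : ℕ) (X : Fin m → Bool → Matrix ι ι ℝ) (hX : ∀ i b, (X i b).PosSemidef)
    (hXR : ∀ i b, (R • (1 : Matrix ι ι ℝ) - X i b).PosSemidef)
    (A : Matrix ι ι ℝ) (hA : (A - 1).PosSemidef) :
    ∑ f : Fin m → Bool, (∏ i, w (f i)) * ((A + ∑ i, X i (f i)) ^ (2 ^ k)).trace
      ≤ ((A + (1 + ((2 ^ k : ℕ) : ℝ) * R) • ∑ i, ∑ b, w b • X i b) ^ (2 ^ k)).trace := by
  induction m generalizing A with
  | zero => simp
  | succ m ih =>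
    have hc : 0 ≤ 1 + ((2 ^ k : ℕ) : ℝ) * R := by positivity
    have hq1 : 1 ≤ 2 ^ k := Nat.one_le_two_pow
    obtain ⟨M, hM⟩ : ∃ M, M = A + (1 + ((2 ^ k : ℕ) : ℝ) * R) •
      ∑ i : Fin m, ∑ b, w b • X i.succ b := ⟨_, rfl⟩
    have hMp : (M - 1).PosSemidef := by
      have : ((1 + ((2 ^ k : ℕ) : ℝ) * R) • ∑ i : Fin m, ∑ b, w b • X i.succ b).PosSemidef :=
        (posSemidef_sum _ fun i _ => posSemidef_sum _ fun b _ => (hX _ b).smul (hw b)).smul hc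
      have h := hA.add this
      rwa [sub_add_eq_add_sub, ← hM] at h
    have hMp' : M.PosSemidef := by simpa using hMp.add PosSemidef.one
    have hmean : ((1 + ((2 ^ k : ℕ) : ℝ) * R) • ∑ b, w b • X 0 b).PosSemidef :=
      (posSemidef_sum _ fun b _ => (hX _ b).smul (hw b)).smul hc
    rw [← (Fin.consEquiv fun _ => Bool).sum_comp, Fintype.sum_prod_type]
    calc ∑ b : Bool, ∑ f : Fin m → Bool, (∏ i, w (Fin.consEquiv (fun _ => Bool) (b, f) i)) *
          ((A + ∑ i, X i (Fin.consEquiv (fun _ => Bool) (b, f) i)) ^ (2 ^ k)).trace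
        = ∑ b : Bool, w b * ∑ f : Fin m → Bool, (∏ i, w (f i)) *
          (((A + X 0 b) + ∑ i : Fin m, X i.succ (f i)) ^ (2 ^ k)).trace := by
          refine Finset.sum_congr rfl fun b _ => ?_
          rw [Finset.mul_sum]
          refine Finset.sum_congr rfl fun f _ => ?_
          simp only [Fin.consEquiv, Equiv.coe_fn_mk, Fin.prod_univ_succ, Fin.sum_univ_succ,
            Fin.cons_zero, Fin.cons_succ, add_assoc, mul_assoc]
      _ ≤ ∑ b : Bool, w b * ((M + X 0 b) ^ (2 ^ k)).trace := by
          refine Finset.sum_le_sum fun b _ => mul_le_mul_of_nonneg_left ?_ (hw b)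
          have hAb : (A + X 0 b - 1).PosSemidef := by
            rw [add_sub_right_comm]; exact hA.add (hX 0 b)
          have h := ih (fun i => X i.succ) (fun i => hX i.succ) (fun i => hXR i.succ) _ hAb
          rwa [add_right_comm, ← hM] at h
      _ ≤ ∑ b : Bool, w b * ((M ^ (2 ^ k)).trace + (1 + ((2 ^ k : ℕ) : ℝ) * R) *
            ((2 ^ k : ℕ) : ℝ) * (M ^ (2 ^ k - 1) * X 0 b).trace) :=
          Finset.sum_le_sum fun b _ => mul_le_mul_of_nonneg_left
            (trace_pow_add_le hMp (hX 0 b) (hXR 0 b) hR k hqR) (hw b)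
      _ = (M ^ (2 ^ k)).trace + ((2 ^ k : ℕ) : ℝ) *
            (M ^ (2 ^ k - 1) * ((1 + ((2 ^ k : ℕ) : ℝ) * R) • ∑ b, w b • X 0 b)).trace := by
          have hw1' : w true + w false = 1 := by simpa using hw1
          simp only [Fintype.sum_bool, Matrix.mul_smul, Matrix.mul_add, trace_smul, trace_add,
            smul_eq_mul]
          linear_combination (M ^ (2 ^ k)).trace * hw1'
      _ ≤ ((M + (1 + ((2 ^ k : ℕ) : ℝ) * R) • ∑ b, w b • X 0 b) ^ (2 ^ k)).trace :=
          trace_pow_add_ge hMp' hmean hq1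
      _ = _ := by
          rw [hM, Fin.sum_univ_succ (fun i => ∑ b, w b • X i b), smul_add]
          congr 2
          abel

/-- Markov-type bound: a positive semidefinite matrix that is not bounded by `c` has large
power traces. -/
lemma pow_le_trace_pow_of_not_posSemidef {ι : Type*} [Fintype ι] [DecidableEq ι]
    {M : Matrix ι ι ℝ} (hM : M.PosSemidef) {c : ℝ} (hc : 0 ≤ c)
    (h : ¬ (c • (1 : Matrix ι ι ℝ) - M).PosSemidef) (q : ℕ) : c ^ q ≤ (M ^ q).trace := by
  obtain ⟨U, a, hU, hU', hAe⟩ := exists_orthogonal_diagonalization hM.1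
  have ha : ∀ i, 0 ≤ a i := (posSemidef_sub_smul_one_iff a hU hU' 0).1 (by simpa [← hAe] using hM)
  rw [hAe, posSemidef_smul_one_sub_iff a hU hU' c] at h
  push Not at h
  obtain ⟨i, hi⟩ := h
  rw [hAe, orthogonal_conj_diagonal_pow a hU hU', Matrix.mul_assoc, Matrix.trace_mul_comm,
    Matrix.mul_assoc, hU, Matrix.mul_one, trace_diagonal]
  exact (pow_le_pow_left₀ hc hi.le q).trans
    (Finset.single_le_sum (f := fun i => a i ^ q) (fun i _ => pow_nonneg (ha i) q)
      (Finset.mem_univ i))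

lemma trace_pow_le_of_posSemidef {ι : Type*} [Fintype ι] [DecidableEq ι]
    {M : Matrix ι ι ℝ} (hM : M.PosSemidef) {c : ℝ}
    (h : (c • (1 : Matrix ι ι ℝ) - M).PosSemidef) (q : ℕ) :
    (M ^ q).trace ≤ Fintype.card ι * c ^ q := by
  obtain ⟨U, a, hU, hU', hAe⟩ := exists_orthogonal_diagonalization hM.1
  have ha : ∀ i, 0 ≤ a i := (posSemidef_sub_smul_one_iff a hU hU' 0).1 (by simpa [← hAe] using hM)
  rw [hAe, posSemidef_smul_one_sub_iff a hU hU' c] at h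
  rw [hAe, orthogonal_conj_diagonal_pow a hU hU', Matrix.mul_assoc, Matrix.trace_mul_comm,
    Matrix.mul_assoc, hU, Matrix.mul_one, trace_diagonal]
  refine (Finset.sum_le_sum fun i _ => pow_le_pow_left₀ (ha i) (h i) q).trans ?_
  simp

lemma edgeLapV_isHermitian {V : Type} [DecidableEq V] (a b : V) :
    (edgeLapV a b).IsHermitian := by
  ext i j
  simp [edgeLapV, mul_comm]

lemma dotProduct_edgeLapV_mulVec {V : Type} [Fintype V] [DecidableEq V] (a b : V) (x : V → ℝ) :
    x ⬝ᵥ (edgeLapV a b *ᵥ x) = (x a - x b) ^ 2 := by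
  have h : edgeLapV a b *ᵥ x = fun i =>
      ((if i = a then (1 : ℝ) else 0) - (if i = b then 1 else 0)) * (x a - x b) := by
    ext i
    simp only [mulVec, dotProduct, edgeLapV, of_apply, mul_assoc, ← Finset.mul_sum]
    congr 1
    simp [sub_mul, Finset.sum_sub_distrib]
  rw [h]
  simp only [dotProduct, ← mul_assoc, ← Finset.sum_mul]
  simp [mul_sub, Finset.sum_sub_distrib, pow_two]

/-- The Laplacian of a multigraph with edge weights `t`. -/
noncomputable def weightedLap {V E : Type} [DecidableEq V] [Fintype E] (a b : E → V)
    (t : E → ℝ) : Matrix V V ℝ :=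
  ∑ e, t e • edgeLapV (a e) (b e)

lemma weightedLap_isHermitian {V E : Type} [DecidableEq V] [Fintype E] (a b : E → V)
    (t : E → ℝ) : (weightedLap a b t).IsHermitian := by
  unfold weightedLap IsHermitian
  rw [conjTranspose_sum]
  refine Finset.sum_congr rfl fun e _ => ?_
  rw [conjTranspose_smul, (edgeLapV_isHermitian _ _).eq]
  simp

lemma dotProduct_weightedLap_mulVec {V E : Type} [Fintype V] [DecidableEq V] [Fintype E]
    (a b : E → V) (t : E → ℝ) (x : V → ℝ) :
    x ⬝ᵥ (weightedLap a b t *ᵥ x) = ∑ e, t e * (x (a e) - x (b e)) ^ 2 := by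
  unfold weightedLap
  rw [Matrix.sum_mulVec, dotProduct_sum]
  refine Finset.sum_congr rfl fun e _ => ?_
  rw [smul_mulVec, dotProduct_smul, dotProduct_edgeLapV_mulVec, smul_eq_mul]

lemma weightedLap_posSemidef {V E : Type} [Fintype V] [DecidableEq V] [Fintype E]
    (a b : E → V) {t : E → ℝ} (ht : ∀ e, 0 ≤ t e) : (weightedLap a b t).PosSemidef := by
  refine PosSemidef.of_dotProduct_mulVec_nonneg (weightedLap_isHermitian a b t) fun x => ?_
  rw [star_trivial, dotProduct_weightedLap_mulVec]
  exact Finset.sum_nonneg fun e _ => mul_nonneg (ht e) (sq_nonneg _)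

/-- Spectral gap of the normalized Laplacian, as a Poincaré inequality. -/
lemma poincare_of_rayleigh {V E : Type} [Fintype V] [DecidableEq V] [Fintype E]
    (a b : E → V) (D : V → ℕ) (hD : ∀ v, 0 < D v) (dmin : ℕ) (hdmin : ∀ v, dmin ≤ D v)
    {lam : ℝ} (hlam : 0 < lam)
    (hmin : ∀ z : V → ℝ, (∑ v, z v * √(D v)) = 0 → (∑ v, (z v) ^ 2) = 1 →
      lam ≤ z ⬝ᵥ ((Matrix.of fun i j =>
        (∑ e : E, edgeLapV (a e) (b e)) i j / (√(D i) * √(D j))) *ᵥ z))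
    (y : V → ℝ) (hy : ∑ v, D v * y v = 0) :
    lam * dmin * ∑ v, y v ^ 2 ≤ ∑ e, (y (a e) - y (b e)) ^ 2 := by
  obtain ⟨Q, hQ⟩ : ∃ Q, Q = ∑ v, (D v : ℝ) * y v ^ 2 := ⟨_, rfl⟩
  have hD' : ∀ v, (0 : ℝ) < D v := fun v => by exact_mod_cast hD v
  have hs : ∀ v, √(D v : ℝ) * √(D v) = D v := fun v => Real.mul_self_sqrt (hD' v).le
  have hs0 : ∀ v, √(D v : ℝ) ≠ 0 := fun v => (Real.sqrt_pos.2 (hD' v)).ne'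
  have hdQ : dmin * ∑ v, y v ^ 2 ≤ Q := by
    rw [hQ, Finset.mul_sum]
    exact Finset.sum_le_sum fun v _ =>
      mul_le_mul_of_nonneg_right (by exact_mod_cast hdmin v) (sq_nonneg _)
  have hQ0 : 0 ≤ Q := hQ ▸ Finset.sum_nonneg fun v _ => mul_nonneg (hD' v).le (sq_nonneg _)
  suffices h : lam * Q ≤ ∑ e, (y (a e) - y (b e)) ^ 2 by nlinarith
  rcases hQ0.eq_or_lt with h0 | h0
  · rw [← h0, mul_zero]
    exact Finset.sum_nonneg fun e _ => sq_nonneg _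
  · have hr : √Q * √Q = Q := Real.mul_self_sqrt hQ0
    have hr0 : √Q ≠ 0 := (Real.sqrt_pos.2 h0).ne'
    have h := hmin (fun v => √(D v) * (y v / √Q))
      (by
        calc ∑ v, √(D v : ℝ) * (y v / √Q) * √(D v) = (∑ v, D v * y v) / √Q := by
              rw [Finset.sum_div]
              refine Finset.sum_congr rfl fun v _ => ?_
              linear_combination (y v / √Q) * hs v
          _ = 0 := by rw [hy, zero_div])
      (by
        calc ∑ v, (√(D v : ℝ) * (y v / √Q)) ^ 2 = (∑ v, (D v : ℝ) * y v ^ 2) / (√Q * √Q) := by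
              rw [Finset.sum_div]
              refine Finset.sum_congr rfl fun v _ => ?_
              linear_combination (y v ^ 2 / (√Q * √Q)) * hs v
          _ = 1 := by rw [← hQ, hr, div_self h0.ne'])
    have e : (fun v => √(D v : ℝ) * (y v / √Q)) ⬝ᵥ ((Matrix.of fun i j =>
        (∑ e : E, edgeLapV (a e) (b e)) i j / (√(D i) * √(D j))) *ᵥ
          (fun v => √(D v : ℝ) * (y v / √Q)))
        = (fun v => y v / √Q) ⬝ᵥ (weightedLap a b (fun _ => 1) *ᵥ (fun v => y v / √Q)) := by
      simp only [dotProduct, mulVec, weightedLap, one_smul, of_apply, Finset.mul_sum]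
      refine Finset.sum_congr rfl fun i _ => Finset.sum_congr rfl fun j _ => ?_
      have := hs0 i
      have := hs0 j
      field_simp
    rw [e, dotProduct_weightedLap_mulVec] at h
    have e2 : ∑ e, 1 * (y (a e) / √Q - y (b e) / √Q) ^ 2 = (∑ e, (y (a e) - y (b e)) ^ 2) / Q := by
      rw [Finset.sum_div]
      refine Finset.sum_congr rfl fun e _ => ?_
      rw [one_mul, ← sub_div, div_pow, pow_two √Q, hr]
    rw [e2, le_div_iff₀ h0] at h
    exact h

/-- The Laplacian of a graph of maximum degree at most `Δ` is at most `2 * Δ`. -/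
lemma weighted_energy_le_of_degree {V E κ : Type} [Fintype V] [DecidableEq V] [Fintype E]
    [DecidableEq κ] (a b : E → V) (c : E → κ) (i : κ) {Δ : ℝ}
    (hdeg : ∀ v, ((Finset.univ.filter fun e : E => c e = i ∧ (a e = v ∨ b e = v)).card : ℝ) ≤ Δ)
    (hab : ∀ e, a e ≠ b e)
    {t : E → ℝ} (ht1 : ∀ e, t e ≤ 1) (htc : ∀ e, c e ≠ i → t e = 0) (x : V → ℝ) :
    ∑ e, t e * (x (a e) - x (b e)) ^ 2 ≤ 2 * Δ * ∑ v, x v ^ 2 := by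
  have h1 : ∀ e, t e * (x (a e) - x (b e)) ^ 2
      ≤ 2 * ∑ v, (if c e = i ∧ (a e = v ∨ b e = v) then x v ^ 2 else 0) := by
    intro e
    by_cases hc : c e = i
    · have hsum : ∑ v, (if c e = i ∧ (a e = v ∨ b e = v) then x v ^ 2 else 0)
          = x (a e) ^ 2 + x (b e) ^ 2 := by
        have : ∀ v, (if c e = i ∧ (a e = v ∨ b e = v) then x v ^ 2 else 0)
            = (if a e = v then x v ^ 2 else 0) + (if b e = v then x v ^ 2 else 0) := by
          intro v
          have := hab e
          by_cases h1 : a e = v <;> by_cases h2 : b e = v <;> simp_all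
        simp only [this, Finset.sum_add_distrib, Finset.sum_ite_eq, Finset.mem_univ, if_true]
      rw [hsum]
      have := mul_le_mul_of_nonneg_right (ht1 e) (sq_nonneg (x (a e) - x (b e)))
      nlinarith [sq_nonneg (x (a e) + x (b e))]
    · simp [htc e hc, hc]
  calc ∑ e, t e * (x (a e) - x (b e)) ^ 2
      ≤ ∑ e, 2 * ∑ v, (if c e = i ∧ (a e = v ∨ b e = v) then x v ^ 2 else 0) :=
        Finset.sum_le_sum fun e _ => h1 e
    _ = 2 * ∑ v, ((Finset.univ.filter fun e : E => c e = i ∧ (a e = v ∨ b e = v)).card : ℝ)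
          * x v ^ 2 := by
        rw [← Finset.mul_sum, Finset.sum_comm]
        congr 1
        refine Finset.sum_congr rfl fun v _ => ?_
        rw [← Finset.sum_filter, Finset.sum_const, nsmul_eq_mul]
    _ ≤ 2 * ∑ v, Δ * x v ^ 2 := by
        refine mul_le_mul_of_nonneg_left (Finset.sum_le_sum fun v _ => ?_) zero_le_two
        exact mul_le_mul_of_nonneg_right (hdeg v) (sq_nonneg _)
    _ = 2 * Δ * ∑ v, x v ^ 2 := by rw [← Finset.mul_sum]; ring

/-- Every vector can be shifted by a constant to become orthogonal to `d`. -/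
lemma exists_shift_orthogonal {V : Type} [Fintype V] (d : V → ℝ) (hd : ∑ v, d v ≠ 0)
    (x : V → ℝ) : ∃ r : ℝ, ∑ v, d v * (x v - r) = 0 := by
  refine ⟨(∑ v, d v * x v) / ∑ v, d v, ?_⟩
  simp only [mul_sub, Finset.sum_sub_distrib, ← Finset.sum_mul]
  field_simp
  simp

lemma dotProduct_vecMulVec_mulVec_self {V : Type} [Fintype V] (d x : V → ℝ) :
    x ⬝ᵥ (vecMulVec d d *ᵥ x) = (∑ v, d v * x v) ^ 2 := by
  rw [vecMulVec_mulVec, dotProduct_smul]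
  simp only [dotProduct, op_smul_eq_smul, smul_eq_mul, pow_two]
  congr 1
  exact Finset.sum_congr rfl fun v _ => mul_comm _ _

lemma vecMulVec_self_isHermitian {V : Type} (d : V → ℝ) : (vecMulVec d d).IsHermitian := by
  ext i j
  simp [vecMulVec_apply, mul_comm]

/-- Under a spectral gap, adding a rank-one term for the kernel makes the Laplacian definite. -/
lemma weightedLap_add_vecMulVec_posDef {V E : Type} [Fintype V] [DecidableEq V] [Fintype E]
    (a b : E → V) (d : V → ℝ) {g : ℝ} (hg : 0 < g)
    (hgap : ∀ y : V → ℝ, ∑ v, d v * y v = 0 →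
      g * ∑ v, y v ^ 2 ≤ ∑ e, (y (a e) - y (b e)) ^ 2) :
    (weightedLap a b (fun _ => 1) + vecMulVec d d).PosDef := by
  refine PosDef.of_dotProduct_mulVec_pos
    ((weightedLap_isHermitian a b _).add (vecMulVec_self_isHermitian d)) fun x hx => ?_
  rw [star_trivial, Matrix.add_mulVec, dotProduct_add, dotProduct_weightedLap_mulVec,
    dotProduct_vecMulVec_mulVec_self]
  simp only [one_mul]
  have hE : 0 ≤ ∑ e, (x (a e) - x (b e)) ^ 2 := Finset.sum_nonneg fun e _ => sq_nonneg _
  have hS : 0 ≤ (∑ v, d v * x v) ^ 2 := sq_nonneg _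
  by_contra hcon
  have h1 : ∑ e, (x (a e) - x (b e)) ^ 2 = 0 := by linarith
  have h2 : (∑ v, d v * x v) ^ 2 = 0 := by linarith
  have h3 := hgap x (pow_eq_zero_iff two_ne_zero |>.1 h2)
  rw [h1] at h3
  have h4 : 0 ≤ ∑ v, x v ^ 2 := Finset.sum_nonneg fun v _ => sq_nonneg _
  have h5 : ∑ v, x v ^ 2 = 0 := by nlinarith
  refine hx (funext fun v => ?_)
  have := (Finset.sum_eq_zero_iff_of_nonneg fun v _ => sq_nonneg (x v)).1 h5 v (Finset.mem_univ v)
  exact pow_eq_zero_iff two_ne_zero |>.1 this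

/-- Each colour class is spectrally small compared with a graph having a spectral gap. -/
lemma weighted_energy_le_total {V E κ : Type} [Fintype V] [DecidableEq V] [Fintype E]
    [DecidableEq κ] (a b : E → V) (c : E → κ) (i : κ) {Δ g : ℝ} (hg : 0 < g) (hΔ : 0 ≤ Δ)
    (d : V → ℝ) (hd : ∑ v, d v ≠ 0)
    (hgap : ∀ y : V → ℝ, ∑ v, d v * y v = 0 →
      g * ∑ v, y v ^ 2 ≤ ∑ e, (y (a e) - y (b e)) ^ 2)
    (hdeg : ∀ v, ((Finset.univ.filter fun e : E => c e = i ∧ (a e = v ∨ b e = v)).card : ℝ) ≤ Δ)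
    (hab : ∀ e, a e ≠ b e)
    {t : E → ℝ} (ht1 : ∀ e, t e ≤ 1) (htc : ∀ e, c e ≠ i → t e = 0) (x : V → ℝ) :
    ∑ e, t e * (x (a e) - x (b e)) ^ 2 ≤ 2 * Δ / g * ∑ e, (x (a e) - x (b e)) ^ 2 := by
  obtain ⟨r, hr⟩ := exists_shift_orthogonal d hd x
  have h1 := weighted_energy_le_of_degree a b c i hdeg hab ht1 htc (fun v => x v - r)
  have h2 := hgap (fun v => x v - r) hr
  simp only [sub_sub_sub_cancel_right] at h1 h2
  rw [div_mul_eq_mul_div, le_div_iff₀ hg]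
  nlinarith

/-- Moment bound for a linear image of the random set of edges whose two colours receive
different bits. -/
lemma two_colour_moment {ι E : Type} [Fintype ι] [DecidableEq ι] [Fintype E] {m₁ m₂ : ℕ}
    (c₁ : E → Fin m₁) (c₂ : E → Fin m₂) (K : (E → ℝ) →ₗ[ℝ] Matrix ι ι ℝ)
    (hK : ∀ t : E → ℝ, (∀ e, 0 ≤ t e) → (K t).PosSemidef)
    (hK1 : (1 - K fun _ => 1).PosSemidef) {R : ℝ} (hR : 0 ≤ R)
    (h₁ : ∀ i, ∀ t : E → ℝ, (∀ e, t e ≤ 1) → (∀ e, c₁ e ≠ i → t e = 0) →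
      (R • (1 : Matrix ι ι ℝ) - K t).PosSemidef)
    (h₂ : ∀ j, ∀ t : E → ℝ, (∀ e, t e ≤ 1) → (∀ e, c₂ e ≠ j → t e = 0) →
      (R • (1 : Matrix ι ι ℝ) - K t).PosSemidef)
    {η μ : ℝ} (hη0 : 0 ≤ η) (hη1 : η ≤ 1) (hμ : 2 * η * (1 - η) ≤ μ) (k : ℕ) {c c' : ℝ}
    (hc : c = 1 + ((2 ^ k : ℕ) : ℝ) * R) (hc' : c' = 1 + ((2 ^ k : ℕ) : ℝ) * (c * R))
    (hqR : ((2 ^ k : ℕ) : ℝ) * (c * R) ≤ 1) :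
    ∑ f₁ : Fin m₁ → Bool, (∏ i, if f₁ i then η else 1 - η) *
      ∑ f₂ : Fin m₂ → Bool, (∏ j, if f₂ j then η else 1 - η) *
        ((1 + K fun e => if f₁ (c₁ e) = f₂ (c₂ e) then 0 else 1) ^ (2 ^ k)).trace
      ≤ Fintype.card ι * (1 + c' * c * μ) ^ (2 ^ k) := by
  have hc1 : 1 ≤ c := by rw [hc]; linarith [mul_nonneg (Nat.cast_nonneg (α := ℝ) (2 ^ k)) hR]
  have hc0 : 0 ≤ c := by linarith
  have hcR : 0 ≤ c * R := mul_nonneg hc0 hR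
  have hc'0 : 0 ≤ c' := by rw [hc']; positivity
  have hqR' : ((2 ^ k : ℕ) : ℝ) * R ≤ 1 :=
    (mul_le_mul_of_nonneg_left (le_mul_of_one_le_left hR hc1) (Nat.cast_nonneg _)).trans hqR
  obtain ⟨w, hw⟩ : ∃ w : Bool → ℝ, w = fun b => if b then η else 1 - η := ⟨_, rfl⟩
  have hw0 : ∀ b, 0 ≤ w b := by
    intro b
    cases b <;> simp [hw, hη0, hη1]
  have hw1 : ∑ b, w b = 1 := by simp [hw]
  have hwt : ∀ b, (if b = true then η else 1 - η) = w b := fun b => by rw [hw]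
  simp only [hwt]
  have hone : ((1 : Matrix ι ι ℝ) - 1).PosSemidef := by rw [sub_self]; exact PosSemidef.zero
  -- averaging over the second family of bits
  have hstage₂ : ∀ f₁ : Fin m₁ → Bool,
      ∑ f₂ : Fin m₂ → Bool, (∏ j, w (f₂ j)) *
        ((1 + K fun e => if f₁ (c₁ e) = f₂ (c₂ e) then 0 else 1) ^ (2 ^ k)).trace
      ≤ ((1 + c • K fun e => w (!f₁ (c₁ e))) ^ (2 ^ k)).trace := by
    intro f₁
    have h := matrix_chernoff_moment k hR hqR' w hw0 hw1 m₂
      (fun j b => K fun e => if c₂ e = j then (if f₁ (c₁ e) = b then 0 else 1) else 0)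
      (fun j b => hK _ fun e => by split_ifs <;> norm_num)
      (fun j b => h₂ j _ (fun e => by split_ifs <;> norm_num) fun e he => by simp [he])
      1 hone
    rw [← hc] at h
    have e2 : ∑ j, ∑ b, w b • K (fun e =>
        if c₂ e = j then (if f₁ (c₁ e) = b then (0 : ℝ) else 1) else 0)
        = K fun e => w (!f₁ (c₁ e)) := by
      simp only [← map_smul, ← map_sum]
      congr 1
      ext e
      simp only [Finset.sum_apply, Pi.smul_apply, smul_eq_mul]
      rw [Finset.sum_comm]
      simp only [mul_ite, mul_zero, mul_one, Finset.sum_ite_eq, Finset.mem_univ, if_true]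
      cases f₁ (c₁ e) <;> simp
    rw [e2] at h
    refine le_trans (le_of_eq ?_) h
    refine Finset.sum_congr rfl fun f₂ _ => ?_
    rw [← map_sum]
    congr 5
    ext e
    simp [Finset.sum_apply]
  -- averaging over the first family of bits
  have hstage₁ : ∑ f₁ : Fin m₁ → Bool, (∏ i, w (f₁ i)) *
        ((1 + c • K fun e => w (!f₁ (c₁ e))) ^ (2 ^ k)).trace
      ≤ ((1 + (c' * c * (2 * η * (1 - η))) • K fun _ => 1) ^ (2 ^ k)).trace := by
    have hwle : ∀ b, w b ≤ 1 := by
      intro b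
      cases b <;> simp [hw, hη0, hη1]
    have h := matrix_chernoff_moment k hcR hqR w hw0 hw1 m₁
      (fun i b => c • K fun e => if c₁ e = i then w (!b) else 0)
      (fun i b => (hK _ fun e => by split_ifs; exacts [hw0 _, le_rfl]).smul hc0)
      (fun i b => by
        have := (h₁ i (fun e => if c₁ e = i then w (!b) else 0)
          (fun e => by split_ifs; exacts [hwle _, zero_le_one]) fun e he => by simp [he]).smul hc0
        rwa [smul_sub, smul_smul] at this)
      1 hone
    rw [← hc'] at h
    have e2 : c' • ∑ i, ∑ b, w b • c • K (fun e => if c₁ e = i then w (!b) else 0)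
        = (c' * c * (2 * η * (1 - η))) • K fun _ => 1 := by
      simp only [← map_smul, ← map_sum]
      congr 1
      ext e
      simp only [Pi.smul_apply, Finset.sum_apply, smul_eq_mul]
      rw [Finset.sum_comm]
      simp [hw]
      ring
    rw [e2] at h
    refine le_trans (le_of_eq ?_) h
    refine Finset.sum_congr rfl fun f₁ _ => ?_
    rw [← Finset.smul_sum, ← map_sum]
    congr 6
    ext e
    simp [Finset.sum_apply]
  have hp : 0 ≤ 2 * η * (1 - η) := mul_nonneg (by linarith) (by linarith)
  have hs0 : 0 ≤ c' * c * (2 * η * (1 - η)) := mul_nonneg (mul_nonneg hc'0 hc0) hp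
  have hKone : (K fun _ => 1).PosSemidef := hK _ fun _ => zero_le_one
  calc _ ≤ ∑ f₁ : Fin m₁ → Bool, (∏ i, w (f₁ i)) *
        ((1 + c • K fun e => w (!f₁ (c₁ e))) ^ (2 ^ k)).trace :=
        Finset.sum_le_sum fun f₁ _ => mul_le_mul_of_nonneg_left (hstage₂ f₁)
          (Finset.prod_nonneg fun i _ => hw0 _)
    _ ≤ _ := hstage₁
    _ ≤ Fintype.card ι * (1 + c' * c * (2 * η * (1 - η))) ^ (2 ^ k) := by
        refine trace_pow_le_of_posSemidef (PosSemidef.one.add (hKone.smul hs0)) ?_ _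
        rw [add_smul, one_smul, add_sub_add_left_eq_sub, ← smul_sub]
        exact hK1.smul hs0
    _ ≤ _ := by
        refine mul_le_mul_of_nonneg_left ?_ (Nat.cast_nonneg _)
        refine pow_le_pow_left₀ (by linarith) ?_ _
        linarith [mul_le_mul_of_nonneg_left hμ (mul_nonneg hc'0 hc0)]

/-- The whitened weighted Laplacian, as a linear function of the edge weights. -/
noncomputable def whitenedLap {V E : Type} [Fintype V] [DecidableEq V] [Fintype E]
    (a b : E → V) (S : Matrix V V ℝ) : (E → ℝ) →ₗ[ℝ] Matrix V V ℝ where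
  toFun t := Sᵀ * weightedLap a b t * S
  map_add' t t' := by
    simp only [weightedLap, Pi.add_apply, add_smul, Finset.sum_add_distrib, Matrix.mul_add,
      Matrix.add_mul]
  map_smul' r t := by
    simp only [weightedLap, Pi.smul_apply, smul_eq_mul, mul_smul, ← Finset.smul_sum,
      Matrix.mul_smul, Matrix.smul_mul, RingHom.id_apply]

/-- Tail bound for the random Laplacian in terms of an even moment. -/
lemma random_laplacian_tail {V E : Type} [Fintype V] [DecidableEq V] [Fintype E]
    (a b : E → V) {m₁ m₂ : ℕ} (c₁ : E → Fin m₁) (c₂ : E → Fin m₂)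
    (d : V → ℝ) (hd : ∑ v, d v ≠ 0) {g R : ℝ} (hg : 0 < g) (hR : 0 ≤ R)
    (hgap : ∀ y : V → ℝ, ∑ v, d v * y v = 0 →
      g * ∑ v, y v ^ 2 ≤ ∑ e, (y (a e) - y (b e)) ^ 2)
    (h₁ : ∀ i, ∀ t : E → ℝ, (∀ e, t e ≤ 1) → (∀ e, c₁ e ≠ i → t e = 0) → ∀ x : V → ℝ,
      ∑ e, t e * (x (a e) - x (b e)) ^ 2 ≤ R * ∑ e, (x (a e) - x (b e)) ^ 2)
    (h₂ : ∀ j, ∀ t : E → ℝ, (∀ e, t e ≤ 1) → (∀ e, c₂ e ≠ j → t e = 0) → ∀ x : V → ℝ,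
      ∑ e, t e * (x (a e) - x (b e)) ^ 2 ≤ R * ∑ e, (x (a e) - x (b e)) ^ 2)
    {η μ τ : ℝ} (hη0 : 0 ≤ η) (hη1 : η ≤ 1) (hμ : 2 * η * (1 - η) ≤ μ) (hτ : 0 ≤ τ) (k : ℕ)
    {c c' : ℝ} (hc : c = 1 + ((2 ^ k : ℕ) : ℝ) * R)
    (hc' : c' = 1 + ((2 ^ k : ℕ) : ℝ) * (c * R)) (hqR : ((2 ^ k : ℕ) : ℝ) * (c * R) ≤ 1) :
    (∑ f : (Fin m₁ → Bool) × (Fin m₂ → Bool),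
      if (τ • weightedLap a b (fun _ => 1) - weightedLap a b
        (fun e => if f.1 (c₁ e) = f.2 (c₂ e) then 0 else 1)).PosSemidef then 0
      else (∏ i, if f.1 i then η else 1 - η) * (∏ j, if f.2 j then η else 1 - η))
        * (1 + τ) ^ (2 ^ k)
      ≤ Fintype.card V * (1 + c' * c * μ) ^ (2 ^ k) := by
  obtain ⟨N, hN⟩ : ∃ N, N = weightedLap a b (fun _ => 1) + vecMulVec d d := ⟨_, rfl⟩
  have hNd : N.PosDef := hN ▸ weightedLap_add_vecMulVec_posDef a b d hg hgap
  obtain ⟨T, S, hT, hTS, hST⟩ := exists_transpose_mul_self_of_posDef hNd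
  have hST' : Tᵀ * Sᵀ = 1 := by rw [← transpose_mul, hST, transpose_one]
  have hTS' : Sᵀ * Tᵀ = 1 := by rw [← transpose_mul, hTS, transpose_one]
  have hSNS : Sᵀ * N * S = 1 := by
    calc Sᵀ * N * S = (Sᵀ * Tᵀ) * (T * S) := by rw [hT]; simp only [Matrix.mul_assoc]
      _ = 1 := by rw [hTS', hTS, Matrix.one_mul]
  have hNq : ∀ x : V → ℝ, x ⬝ᵥ (N *ᵥ x)
      = ∑ e, (x (a e) - x (b e)) ^ 2 + (∑ v, d v * x v) ^ 2 := by
    intro x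
    rw [hN, Matrix.add_mulVec, dotProduct_add, dotProduct_weightedLap_mulVec,
      dotProduct_vecMulVec_mulVec_self]
    simp only [one_mul]
  have hwhite : ∀ t, whitenedLap a b S t = Sᵀ * weightedLap a b t * S := fun _ => rfl
  have hbound : ∀ r : ℝ, 0 ≤ r → ∀ t : E → ℝ, (∀ x : V → ℝ,
      ∑ e, t e * (x (a e) - x (b e)) ^ 2 ≤ r * ∑ e, (x (a e) - x (b e)) ^ 2) →
      (r • (1 : Matrix V V ℝ) - whitenedLap a b S t).PosSemidef := by
    intro r hr t ht
    have h : (r • N - weightedLap a b t).PosSemidef := by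
      refine PosSemidef.of_dotProduct_mulVec_nonneg ?_ fun x => ?_
      · exact (hNd.posSemidef.smul hr).1.sub (weightedLap_isHermitian a b t)
      · rw [star_trivial, Matrix.sub_mulVec, dotProduct_sub, smul_mulVec, dotProduct_smul, hNq,
          dotProduct_weightedLap_mulVec, smul_eq_mul]
        nlinarith [ht x, mul_nonneg hr (sq_nonneg (∑ v, d v * x v))]
    have h2 := posSemidef_transpose_conj h S
    rwa [Matrix.mul_sub, Matrix.sub_mul, Matrix.mul_smul, Matrix.smul_mul, hSNS, ← hwhite] at h2
  have hpsd : ∀ t : E → ℝ, (∀ e, 0 ≤ t e) → (whitenedLap a b S t).PosSemidef := fun t ht =>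
    posSemidef_transpose_conj (weightedLap_posSemidef a b ht) S
  have hmoment := two_colour_moment c₁ c₂ (whitenedLap a b S) hpsd
    (by simpa using hbound 1 zero_le_one (fun _ => 1) fun x => by simp) hR
    (fun i t ht htc => hbound R hR t (h₁ i t ht htc))
    (fun j t ht htc => hbound R hR t (h₂ j t ht htc)) hη0 hη1 hμ k hc hc' hqR
  have hunwhite : ∀ t : E → ℝ, (τ • (1 : Matrix V V ℝ) - whitenedLap a b S t).PosSemidef →
      (τ • weightedLap a b (fun _ => 1) - weightedLap a b t).PosSemidef := by
    intro t ht
    have h := posSemidef_transpose_conj ht T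
    have e : Tᵀ * whitenedLap a b S t * T = weightedLap a b t := by
      calc Tᵀ * whitenedLap a b S t * T = (Tᵀ * Sᵀ) * weightedLap a b t * (S * T) := by
            rw [hwhite]; simp only [Matrix.mul_assoc]
        _ = weightedLap a b t := by rw [hST', hST, Matrix.one_mul, Matrix.mul_one]
    rw [Matrix.mul_sub, Matrix.sub_mul, Matrix.mul_smul, Matrix.smul_mul, Matrix.mul_one, ← hT,
      e] at h
    refine PosSemidef.of_dotProduct_mulVec_nonneg ?_ fun x => ?_
    · exact ((weightedLap_posSemidef a b fun _ => zero_le_one).smul hτ).1.sub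
        (weightedLap_isHermitian a b t)
    · obtain ⟨r, hr⟩ := exists_shift_orthogonal d hd x
      have hx := h.dotProduct_mulVec_nonneg (fun v => x v - r)
      rw [star_trivial, Matrix.sub_mulVec, dotProduct_sub, smul_mulVec, dotProduct_smul, hNq, hr,
        dotProduct_weightedLap_mulVec, smul_eq_mul] at hx
      rw [star_trivial, Matrix.sub_mulVec, dotProduct_sub, smul_mulVec, dotProduct_smul,
        dotProduct_weightedLap_mulVec, dotProduct_weightedLap_mulVec, smul_eq_mul]
      simpa using hx
  refine le_trans ?_ hmoment
  rw [Fintype.sum_prod_type, Finset.sum_mul]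
  refine Finset.sum_le_sum fun f₁ _ => ?_
  rw [Finset.sum_mul, Finset.mul_sum]
  refine Finset.sum_le_sum fun f₂ _ => ?_
  have hw : ∀ (m : ℕ) (f : Fin m → Bool), 0 ≤ ∏ i, (if f i then η else 1 - η) := fun m f =>
    Finset.prod_nonneg fun i _ => by split_ifs <;> linarith
  have hH : (1 + whitenedLap a b S
      (fun e => if f₁ (c₁ e) = f₂ (c₂ e) then 0 else 1)).PosSemidef :=
    PosSemidef.one.add (hpsd _ fun e => by split_ifs <;> norm_num)
  rw [← mul_assoc]
  split_ifs with hgood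
  · rw [zero_mul]
    exact mul_nonneg (mul_nonneg (hw _ _) (hw _ _)) (hH.pow _).trace_nonneg
  · refine mul_le_mul_of_nonneg_left ?_ (mul_nonneg (hw _ _) (hw _ _))
    refine pow_le_trace_pow_of_not_posSemidef hH (by linarith) (fun hcon => hgood ?_) _
    refine hunwhite _ ?_
    rwa [add_smul, one_smul, add_sub_add_left_eq_sub] at hcon

/-- Choice of the moment: a power of two comparable with `log n / δ`. -/
lemma exists_moment_exponent {n : ℕ} (hn : 2 ≤ n) {δ R μ : ℝ} (hδ0 : 0 < δ) (hδ1 : δ ≤ 1)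
    (hR0 : 0 ≤ R) (hR : R * (2880 * Real.log n) = 2 * δ ^ 2) (hμ0 : 1 / 6 ≤ μ) (hμ1 : μ ≤ 1 / 2) :
    ∃ k : ℕ, ∃ c c' : ℝ, c = 1 + ((2 ^ k : ℕ) : ℝ) * R ∧ c' = 1 + ((2 ^ k : ℕ) : ℝ) * (c * R) ∧
      ((2 ^ k : ℕ) : ℝ) * (c * R) ≤ 1 ∧
      n * (1 + c' * c * μ) ^ (2 ^ k) ≤ 1 / (n : ℝ) ^ 2 * (1 + (1 + δ) * μ) ^ (2 ^ k) := by
  have hn0 : (0 : ℝ) < n := by exact_mod_cast (by omega : 0 < n)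
  have hlog : 1 / 2 ≤ Real.log n := by
    have h1 : Real.log 2 ≤ Real.log n :=
      Real.log_le_log two_pos (by exact_mod_cast hn)
    linarith [Real.log_two_gt_d9]
  have hlog0 : 0 < Real.log n := by linarith
  have hx1 : 1 ≤ 72 * Real.log n / δ := by
    rw [le_div_iff₀ hδ0]; linarith
  obtain ⟨m, hm1, hm2⟩ := exists_nat_pow_near hx1 (one_lt_two (α := ℝ))
  obtain ⟨q, hq⟩ : ∃ q : ℝ, q = ((2 ^ (m + 1) : ℕ) : ℝ) := ⟨_, rfl⟩
  have hq' : q = 2 * 2 ^ m := by rw [hq]; push_cast; ring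
  have hq0 : 0 ≤ q := by rw [hq']; positivity
  have hlow : 72 * Real.log n ≤ q * δ := by
    rw [div_lt_iff₀ hδ0, pow_succ] at hm2
    rw [hq']; linarith
  have hup : q * δ ≤ 144 * Real.log n := by
    rw [le_div_iff₀ hδ0] at hm1
    rw [hq']; linarith
  have hqR : q * R ≤ δ / 10 := by
    have h : q * R * (2880 * Real.log n) ≤ δ / 10 * (2880 * Real.log n) := by
      calc q * R * (2880 * Real.log n) = (q * δ) * (2 * δ) := by rw [mul_assoc, hR]; ring
        _ ≤ (144 * Real.log n) * (2 * δ) := mul_le_mul_of_nonneg_right hup (by linarith)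
        _ = δ / 10 * (2880 * Real.log n) := by ring
    exact le_of_mul_le_mul_right h (by linarith)
  have hqR0 : 0 ≤ q * R := mul_nonneg hq0 hR0
  refine ⟨m + 1, 1 + q * R, 1 + q * ((1 + q * R) * R), by rw [hq], by rw [hq], ?_, ?_⟩
  · rw [← hq]; nlinarith
  · have hcc : (1 + q * ((1 + q * R) * R)) * (1 + q * R) ≤ 1 + δ / 2 := by
      have h1 : 1 + q * R ≤ 11 / 10 := by linarith
      have h2 : q * ((1 + q * R) * R) ≤ 11 / 100 * δ := by nlinarith
      nlinarith
    have hcc0 : 0 ≤ (1 + q * ((1 + q * R) * R)) * (1 + q * R) := by positivity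
    have hratio : 1 + (1 + q * ((1 + q * R) * R)) * (1 + q * R) * μ
        ≤ (1 - δ / 24) * (1 + (1 + δ) * μ) := by
      have h1 := mul_le_mul_of_nonneg_right hcc (by linarith : 0 ≤ μ)
      have h2 : (1 + δ) * μ ≤ 1 := by nlinarith
      nlinarith
    have hexp : (1 - δ / 24) ^ (2 ^ (m + 1)) ≤ 1 / (n : ℝ) ^ 3 := by
      calc (1 - δ / 24) ^ (2 ^ (m + 1)) ≤ Real.exp (-(δ / 24)) ^ (2 ^ (m + 1)) :=
            pow_le_pow_left₀ (by linarith) (by linarith [Real.add_one_le_exp (-(δ / 24))]) _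
        _ = Real.exp (q * -(δ / 24)) := by rw [← Real.exp_nat_mul, hq]
        _ ≤ Real.exp (-(3 * Real.log n)) := Real.exp_le_exp.2 (by linarith)
        _ = 1 / (n : ℝ) ^ 3 := by
            rw [Real.exp_neg, one_div]
            congr 1
            have := Real.exp_nat_mul (Real.log n) 3
            rw [Real.exp_log hn0] at this
            exact_mod_cast this
    have hpos : 0 ≤ (1 + (1 + δ) * μ) ^ (2 ^ (m + 1)) := by
      have : 0 ≤ (1 + δ) * μ := mul_nonneg (by linarith) (by linarith)
      positivity
    calc n * (1 + (1 + q * ((1 + q * R) * R)) * (1 + q * R) * μ) ^ (2 ^ (m + 1))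
        ≤ n * ((1 - δ / 24) * (1 + (1 + δ) * μ)) ^ (2 ^ (m + 1)) := by
          refine mul_le_mul_of_nonneg_left (pow_le_pow_left₀ ?_ hratio _) hn0.le
          have := mul_nonneg hcc0 (by linarith : 0 ≤ μ)
          linarith
      _ = n * ((1 - δ / 24) ^ (2 ^ (m + 1)) * (1 + (1 + δ) * μ) ^ (2 ^ (m + 1))) := by
          rw [mul_pow]
      _ ≤ n * (1 / (n : ℝ) ^ 3 * (1 + (1 + δ) * μ) ^ (2 ^ (m + 1))) :=
          mul_le_mul_of_nonneg_left (mul_le_mul_of_nonneg_right hexp hpos) hn0.le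
      _ = _ := by field_simp

/-- Product Bernoulli weights on bit vectors sum to one. -/
lemma sum_prod_bernoulli (m : ℕ) (η : ℝ) :
    ∑ f : Fin m → Bool, ∏ i, (if f i then η else 1 - η) = 1 := by
  have h := (Finset.prod_univ_sum (fun _ : Fin m => (Finset.univ : Finset Bool))
    (fun _ b => if b then η else 1 - η)).symm
  rw [Fintype.piFinset_univ] at h
  rw [h]
  simp

theorem stmt_4 : ∃ B C : ℝ, 0 < B ∧ 0 < C ∧
    ∀ (n : ℕ), 2 ≤ n →
    ∀ (E : Type) [Fintype E] [DecidableEq E],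
    ∀ (a b : E → Fin n), (∀ e, a e ≠ b e) →
    ∀ (s : Fin n → ℕ) (D : Fin n → ℕ),
      (∀ v, D v = (Finset.univ.filter fun e : E => a e = v ∨ b e = v).card + s v) →
      (∀ v, 0 < D v) →
    ∀ dmin : ℕ, IsLeast (Set.range D) dmin →
    -- `lam > 0` is the second-smallest eigenvalue of `D^{−1/2} L_G D^{−1/2}`:
    -- the minimum Rayleigh quotient over unit vectors orthogonal to `D^{1/2}·1`,
    -- the eigenvector of the smallest eigenvalue `0`.
    ∀ lam : ℝ, 0 < lam →
      IsLeast {r : ℝ | ∃ z : Fin n → ℝ,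
        (∑ v, z v * Real.sqrt (D v)) = 0 ∧ (∑ v, (z v) ^ 2) = 1 ∧
        r = z ⬝ᵥ ((Matrix.of fun i j =>
            (∑ e : E, edgeLapV (a e) (b e)) i j / (Real.sqrt (D i) * Real.sqrt (D j))) *ᵥ z)} lam →
    ∀ (m₁ m₂ : ℕ) (Δ : ℝ), 1 ≤ Δ →
    ∀ (c₁ : E → Fin m₁) (c₂ : E → Fin m₂),
      Function.Injective (fun e => (c₁ e, c₂ e)) →
      (∀ (i : Fin m₁) (v : Fin n),
        ((Finset.univ.filter fun e : E => c₁ e = i ∧ (a e = v ∨ b e = v)).card : ℝ) ≤ Δ) →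
      (∀ (j : Fin m₂) (v : Fin n),
        ((Finset.univ.filter fun e : E => c₂ e = j ∧ (a e = v ∨ b e = v)).card : ℝ) ≤ Δ) →
    ∀ η : ℝ, η ∈ Set.Ico (0 : ℝ) (1 / 2) →
      B * Δ * Real.log n ≤ (dmin : ℝ) * lam →
    ∀ δ : ℝ, δ = Real.sqrt (B * Δ * Real.log n / ((dmin : ℝ) * lam)) →
      1 - C / (n : ℝ) ^ 2 ≤
        ∑ f : (Fin m₁ → Bool) × (Fin m₂ → Bool),
          if (max ((1 + δ) * (2 * η * (1 - η))) (1 / 3) • (∑ e : E, edgeLapV (a e) (b e)) -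
              ∑ e : E, (if sgn (f.1 (c₁ e)) * sgn (f.2 (c₂ e)) = -1
                        then edgeLapV (a e) (b e) else 0)).PosSemidef
          then (∏ i, if f.1 i then η else 1 - η) * (∏ j, if f.2 j then η else 1 - η)
          else 0 := by
  refine ⟨2880, 1, by norm_num, one_pos, ?_⟩
  intro n hn E _ _ a b hab s D _ hDpos dmin hdmin lam hlam hleast m₁ m₂ Δ hΔ c₁ c₂ _ hdeg₁ hdeg₂
    η hη hB δ hδ
  have hdpos : (0 : ℝ) < dmin := by
    obtain ⟨v, hv⟩ := hdmin.1
    rw [← hv]; exact_mod_cast hDpos v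
  have hg : 0 < (dmin : ℝ) * lam := mul_pos hdpos hlam
  have hlog : 0 < Real.log n := Real.log_pos (by exact_mod_cast hn)
  have hnum : 0 < 2880 * Δ * Real.log n := mul_pos (by linarith) hlog
  have hδ0 : 0 < δ := by rw [hδ]; exact Real.sqrt_pos.2 (div_pos hnum hg)
  have hδsq : δ ^ 2 = 2880 * Δ * Real.log n / (dmin * lam) := by
    rw [hδ]; exact Real.sq_sqrt (div_pos hnum hg).le
  have hδ1 : δ ≤ 1 := by
    rw [hδ]; exact Real.sqrt_le_one.2 ((div_le_one hg).2 hB)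
  have hsum : ∑ v, (D v : ℝ) ≠ 0 := by
    have : Nonempty (Fin n) := ⟨⟨0, by omega⟩⟩
    exact (Finset.sum_pos (fun v _ => by exact_mod_cast hDpos v) Finset.univ_nonempty).ne'
  have hgap : ∀ y : Fin n → ℝ, ∑ v, (D v : ℝ) * y v = 0 →
      (dmin : ℝ) * lam * ∑ v, y v ^ 2 ≤ ∑ e, (y (a e) - y (b e)) ^ 2 := by
    intro y hy
    have := poincare_of_rayleigh a b D hDpos dmin (fun v => hdmin.2 ⟨v, rfl⟩) hlam
      (fun z hz1 hz2 => hleast.2 ⟨z, hz1, hz2, rfl⟩) y hy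
    rwa [mul_comm lam] at this
  obtain ⟨R, hRdef⟩ : ∃ R, R = 2 * Δ / (dmin * lam) := ⟨_, rfl⟩
  have hR0 : 0 ≤ R := by rw [hRdef]; exact div_nonneg (by linarith) hg.le
  have hR : R * (2880 * Real.log n) = 2 * δ ^ 2 := by rw [hRdef, hδsq]; ring
  obtain ⟨hη0, hη1⟩ := hη
  have hp : 2 * η * (1 - η) ≤ 1 / 2 := by nlinarith [sq_nonneg (2 * η - 1)]
  obtain ⟨μ, hμ⟩ : ∃ μ, μ = max (2 * η * (1 - η)) (1 / 6) := ⟨_, rfl⟩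
  have hμp : 2 * η * (1 - η) ≤ μ := hμ ▸ le_max_left _ _
  have hμ0 : 1 / 6 ≤ μ := hμ ▸ le_max_right _ _
  have hμ1 : μ ≤ 1 / 2 := hμ ▸ max_le hp (by norm_num)
  obtain ⟨τ, hτ⟩ : ∃ τ, τ = max ((1 + δ) * (2 * η * (1 - η))) (1 / 3) := ⟨_, rfl⟩
  have hτ0 : 0 ≤ τ := by rw [hτ]; exact le_max_of_le_right (by norm_num)
  have hμτ : (1 + δ) * μ ≤ τ := by
    rw [hμ, hτ, mul_max_of_nonneg _ _ (by linarith)]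
    exact max_le_max le_rfl (by linarith)
  obtain ⟨k, c, c', hc, hc', hqR, hfin⟩ := exists_moment_exponent hn hδ0 hδ1 hR0 hR hμ0 hμ1
  have htail := random_laplacian_tail a b c₁ c₂ (fun v => (D v : ℝ)) hsum hg hR0 hgap
    (fun i t ht htc x => hRdef ▸ weighted_energy_le_total a b c₁ i hg (by linarith)
      (fun v => (D v : ℝ)) hsum hgap (hdeg₁ i) hab ht htc x)
    (fun j t ht htc x => hRdef ▸ weighted_energy_le_total a b c₂ j hg (by linarith)
      (fun v => (D v : ℝ)) hsum hgap (hdeg₂ j) hab ht htc x)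
    hη0 (by linarith) hμp hτ0 k hc hc' hqR
  rw [Fintype.card_fin] at htail
  have hbad := le_of_mul_le_mul_right ((htail.trans hfin).trans
    (mul_le_mul_of_nonneg_left (pow_le_pow_left₀
      (by linarith [mul_nonneg (by linarith : 0 ≤ 1 + δ) (by linarith : 0 ≤ μ)])
      (by linarith : 1 + (1 + δ) * μ ≤ 1 + τ) _) (by positivity)))
    (by positivity : 0 < (1 + τ) ^ (2 ^ k))
  have htotal : ∑ f : (Fin m₁ → Bool) × (Fin m₂ → Bool),
      (∏ i, if f.1 i then η else 1 - η) * (∏ j, if f.2 j then η else 1 - η) = 1 := by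
    have h := Fintype.sum_mul_sum (fun f : Fin m₁ → Bool => ∏ i, if f i then η else 1 - η)
      (fun f : Fin m₂ → Bool => ∏ j, if f j then η else 1 - η)
    rw [sum_prod_bernoulli, sum_prod_bernoulli, one_mul] at h
    rw [Fintype.sum_prod_type]
    exact h.symm
  rw [sub_le_iff_le_add]
  refine htotal.symm.le.trans (le_trans (le_of_eq ?_) (add_le_add_right hbad _))
  rw [← Finset.sum_add_distrib]
  refine Finset.sum_congr rfl fun f _ => ?_
  have hG : ∑ e, edgeLapV (a e) (b e) = weightedLap a b (fun _ => 1) := by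
    simp [weightedLap]
  have hH : (∑ e, if sgn (f.1 (c₁ e)) * sgn (f.2 (c₂ e)) = -1 then edgeLapV (a e) (b e) else 0)
      = weightedLap a b (fun e => if f.1 (c₁ e) = f.2 (c₂ e) then 0 else 1) := by
    refine Finset.sum_congr rfl fun e _ => ?_
    cases h₁ : f.1 (c₁ e) <;> cases h₂ : f.2 (c₂ e) <;> norm_num [sgn, h₁, h₂]
  rw [hG, hH, ← hτ]
  split_ifs <;> simp
end

section
/- There is a universal constant c > 0 such that the following holds. Let G be a finite graph on vertex set V given by a finite edge-index set E with endpoint maps to unordered pairs of distinct vertices (parallel edges allowed), with m = |E| ≥ 2 edges and no isolated vertices, and let ε ∈ (0,1). Then there exists a partition V = V₁ ∪ ⋯ ∪ V_T such that: (a) the number of edges whose two endpoints lie in different parts is at most εm; and (b) for each i ∈ [T], writing L_i for the Laplacian of the subgraph of G induced on V_i and D_i for the diagonal matrix, indexed by V_i, whose entries are the degrees of the vertices in the whole graph G, every vector z ∈ ℝ^{V_i} orthogonal to D_i^{1/2}·1 satisfies zᵀ D_i^{−1/2} L_i D_i^{−1/2} z ≥ (c·ε²/log² m)·‖z‖². (Condition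 (b) says that the second-smallest eigenvalue of the normalized Laplacian of G{V_i}, the induced subgraph with self-loops added so vertices keep their G-degrees, is at least cε²/log² m.) -/
open Finset Matrix
open scoped Classical

theorem dotProduct_sum_edgeLapV_mulVec {V E : Type} [Fintype V] [DecidableEq V] (a b : E → V)
    (F : Finset E) (y : V → ℝ) :
    y ⬝ᵥ ((∑ e ∈ F, edgeLapV (a e) (b e)) *ᵥ y) = ∑ e ∈ F, (y (a e) - y (b e)) ^ 2 := by
  rw [Matrix.sum_mulVec, dotProduct_sum]
  refine Finset.sum_congr rfl fun e _ => ?_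
  have hmul : edgeLapV (a e) (b e) *ᵥ y = fun i =>
      ((if i = a e then (1 : ℝ) else 0) - (if i = b e then 1 else 0)) * (y (a e) - y (b e)) := by
    ext i
    simp only [mulVec, dotProduct, edgeLapV, Matrix.of_apply, mul_assoc]
    rw [← Finset.mul_sum]
    simp [sub_mul, Finset.sum_sub_distrib]
  rw [hmul]
  simp only [dotProduct, ← mul_assoc]
  rw [← Finset.sum_mul]
  simp [mul_sub, Finset.sum_sub_distrib, sq]

/-- Discrete coarea inequality: expansion of every subset of the support of a nonnegative
function bounds its weighted sum by its total variation along the edges. -/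
theorem mul_sum_le_sum_abs_sub {V E : Type} [Fintype V] [DecidableEq V] (a b : E → V)
    (F : Finset E) (d : V → ℝ) (φ : ℝ) (f : V → ℝ) (hf : ∀ v, 0 ≤ f v)
    (hφ : ∀ A : Finset V, (∀ v ∈ A, 0 < f v) →
      φ * ∑ v ∈ A, d v ≤ ((F.filter fun e => ¬(a e ∈ A ↔ b e ∈ A)).card : ℝ)) :
    φ * ∑ v, d v * f v ≤ ∑ e ∈ F, |f (a e) - f (b e)| := by
  induction hn : (univ.filter fun v => 0 < f v).card using Nat.strong_induction_on
    generalizing f with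
  | _ n ih =>
  set A := univ.filter fun v => 0 < f v with hA
  have memA : ∀ v, v ∈ A ↔ 0 < f v := fun v => by simp [hA]
  have zeroA : ∀ v, v ∉ A → f v = 0 := fun v hv =>
    le_antisymm (not_lt.1 fun h => hv ((memA v).2 h)) (hf v)
  rcases A.eq_empty_or_nonempty with hE | hne
  · have h0 : ∀ v, f v = 0 := fun v => zeroA v (by simp [hE])
    simp [h0]
  obtain ⟨w, hw, hmin⟩ := A.exists_min_image f hne
  set δ := f w with hδ
  have hδ0 : 0 < δ := (memA w).1 hw
  let g : V → ℝ := fun v => f v - if v ∈ A then δ else 0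
  have hg0 : ∀ v, 0 ≤ g v := fun v => by
    by_cases hv : v ∈ A
    · simpa [g, hv] using hmin v hv
    · simpa [g, hv] using hf v
  have hgf : ∀ v, 0 < g v → 0 < f v := fun v hv => by
    have : g v ≤ f v := by
      by_cases hv : v ∈ A <;> simp [g, hv, hδ0.le]
    linarith
  have hcard : (univ.filter fun v => 0 < g v).card < n := by
    rw [← hn]
    refine Finset.card_lt_card (Finset.ssubset_iff_of_subset ?_ |>.2 ⟨w, hw, ?_⟩)
    · intro v hv
      exact (memA v).2 (hgf v (by simpa using hv))
    · simp [g, hw, ← hδ]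
  have key := ih _ hcard g hg0 (fun B hB => hφ B fun v hv => hgf v (hB v hv)) rfl
  have hcut := hφ A fun v hv => (memA v).1 hv
  have h1 : ∑ v, d v * f v = ∑ v, d v * g v + δ * ∑ v ∈ A, d v := by
    have : ∑ v ∈ A, d v = ∑ v, if v ∈ A then d v else 0 := by simp
    rw [this, Finset.mul_sum, ← Finset.sum_add_distrib]
    refine Finset.sum_congr rfl fun v _ => ?_
    by_cases hv : v ∈ A
    · simp only [g, hv, if_true]
      ring
    · simp [g, hv]
  have h2 : ∑ e ∈ F, |f (a e) - f (b e)| = ∑ e ∈ F, |g (a e) - g (b e)| +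
      δ * ((F.filter fun e => ¬(a e ∈ A ↔ b e ∈ A)).card : ℝ) := by
    rw [Finset.card_filter, Nat.cast_sum, Finset.mul_sum, ← Finset.sum_add_distrib]
    refine Finset.sum_congr rfl fun e _ => ?_
    by_cases ha : a e ∈ A <;> by_cases hb : b e ∈ A
    · simp [g, ha, hb]
    · have := hmin _ ha
      simp only [g, ha, hb, zeroA _ hb, if_true, if_false, sub_zero]
      rw [abs_of_nonneg (hf _), abs_of_nonneg (by linarith)]
      simp
    · have := hmin _ hb
      simp only [g, ha, hb, zeroA _ ha, if_true, if_false, sub_zero]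
      rw [abs_sub_comm, sub_zero, abs_of_nonneg (hf _), abs_sub_comm, abs_of_nonneg (by linarith)]
      simp
    · simp [g, ha, hb]
  rw [h1, h2, mul_add]
  nlinarith [mul_le_mul_of_nonneg_left hcut hδ0.le]

/-- The Cheeger estimate for a function all of whose support's subsets expand. -/
theorem sq_mul_sum_sq_le_of_expansion {V E : Type} [Fintype V] [DecidableEq V] (a b : E → V)
    (F : Finset E) (d : V → ℝ) (hd0 : ∀ v, 0 ≤ d v)
    (hd : ∀ f : V → ℝ, (∀ v, 0 ≤ f v) → ∑ e ∈ F, (f (a e) + f (b e)) ≤ ∑ v, d v * f v)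
    (φ : ℝ) (hφ0 : 0 ≤ φ) (g : V → ℝ) (hg : ∀ v, 0 ≤ g v)
    (hφ : ∀ A : Finset V, (∀ v ∈ A, 0 < g v) →
      φ * ∑ v ∈ A, d v ≤ ((F.filter fun e => ¬(a e ∈ A ↔ b e ∈ A)).card : ℝ)) :
    φ ^ 2 / 2 * ∑ v, d v * g v ^ 2 ≤ ∑ e ∈ F, (g (a e) - g (b e)) ^ 2 := by
  have hco := mul_sum_le_sum_abs_sub a b F d φ (fun v => g v ^ 2) (fun v => sq_nonneg _)
    (fun A hA => hφ A fun v hv => (hg v).lt_of_ne fun h => by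
      have := hA v hv
      simp [← h] at this)
  have hcs := Finset.sum_mul_sq_le_sq_mul_sq F (fun e => |g (a e) - g (b e)|)
    (fun e => g (a e) + g (b e))
  have hprod : ∀ e, |g (a e) - g (b e)| * (g (a e) + g (b e)) = |g (a e) ^ 2 - g (b e) ^ 2| := by
    intro e
    rw [← abs_of_nonneg (add_nonneg (hg (a e)) (hg (b e))), ← abs_mul]
    congr 1
    ring
  simp only [hprod, sq_abs] at hcs
  have hdeg : ∑ e ∈ F, (g (a e) + g (b e)) ^ 2 ≤ 2 * ∑ v, d v * g v ^ 2 := by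
    refine le_trans ?_ (mul_le_mul_of_nonneg_left (hd (fun v => g v ^ 2) fun v => sq_nonneg _)
      zero_le_two)
    rw [Finset.mul_sum]
    exact Finset.sum_le_sum fun e _ => by nlinarith [sq_nonneg (g (a e) - g (b e))]
  set X := ∑ v, d v * g v ^ 2
  set Y := ∑ e ∈ F, (g (a e) - g (b e)) ^ 2
  have hX : 0 ≤ X := Finset.sum_nonneg fun v _ => mul_nonneg (hd0 v) (sq_nonneg _)
  have hY : 0 ≤ Y := Finset.sum_nonneg fun e _ => sq_nonneg _
  rcases hX.eq_or_lt with h | h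
  · rw [← h]
    simpa using hY
  have h1 : (φ * X) ^ 2 ≤ Y * (2 * X) :=
    (pow_le_pow_left₀ (mul_nonneg hφ0 hX) hco 2).trans
      (hcs.trans (mul_le_mul_of_nonneg_left hdeg hY))
  have h2 : (φ ^ 2 / 2 * X) * X ≤ Y * X := by nlinarith
  exact le_of_mul_le_mul_right h2 h

/-- A weighted median of a function on a nonempty finite set. -/
theorem exists_weighted_median {V : Type} (S : Finset V) (hS : S.Nonempty) (d : V → ℝ)
    (hd : ∀ v, 0 ≤ d v) (y : V → ℝ) :
    ∃ t : ℝ, 2 * ∑ v ∈ S.filter (fun v => t < y v), d v ≤ ∑ v ∈ S, d v ∧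
      2 * ∑ v ∈ S.filter (fun v => y v < t), d v ≤ ∑ v ∈ S, d v := by
  set M := S.filter fun w => 2 * ∑ v ∈ S.filter (fun v => y w < y v), d v ≤ ∑ v ∈ S, d v with hM
  have hMne : M.Nonempty := by
    obtain ⟨w, hw, hmax⟩ := S.exists_max_image y hS
    refine ⟨w, Finset.mem_filter.2 ⟨hw, ?_⟩⟩
    rw [Finset.filter_false_of_mem fun v hv => not_lt.2 (hmax v hv)]
    simpa using Finset.sum_nonneg fun v _ => hd v
  obtain ⟨w, hw, hmin⟩ := M.exists_min_image y hMne
  refine ⟨y w, (Finset.mem_filter.1 hw).2, ?_⟩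
  rcases (S.filter fun v => y v < y w).eq_empty_or_nonempty with hE | hne
  · rw [hE]
    simpa using Finset.sum_nonneg fun v _ => hd v
  obtain ⟨u, hu, humax⟩ := (S.filter fun v => y v < y w).exists_max_image y hne
  rw [Finset.mem_filter] at hu
  have huM : u ∉ M := fun h => absurd (hmin u h) (not_le.2 hu.2)
  have hlt : ∑ v ∈ S, d v < 2 * ∑ v ∈ S.filter (fun v => y u < y v), d v := by
    by_contra hcon
    exact huM (Finset.mem_filter.2 ⟨hu.1, not_lt.1 hcon⟩)
  have hsplit := Finset.sum_filter_add_sum_filter_not S (fun v => y u < y v) d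
  have heq : S.filter (fun v => y v < y w) = S.filter (fun v => ¬ y u < y v) := by
    refine Finset.filter_congr fun v hv => ⟨fun h => ?_, fun h => ?_⟩
    · exact not_lt.2 (humax v (Finset.mem_filter.2 ⟨hv, h⟩))
    · exact (not_lt.1 h).trans_lt hu.2
  rw [heq]
  linarith

/-- The hard direction of Cheeger's inequality for the induced subgraph on `S`, with vertex
weights `d` dominating the degrees inside `S`. -/
theorem cheeger_of_expansion {V E : Type} [Fintype V] [DecidableEq V] (a b : E → V)
    (S : Finset V) (F : Finset E) (hF : ∀ e ∈ F, a e ∈ S ∧ b e ∈ S)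
    (d : V → ℝ) (hd0 : ∀ v, 0 ≤ d v)
    (hd : ∀ f : V → ℝ, (∀ v, 0 ≤ f v) → ∑ e ∈ F, (f (a e) + f (b e)) ≤ ∑ v, d v * f v)
    (φ : ℝ) (hφ0 : 0 ≤ φ)
    (hφ : ∀ A ⊆ S, 2 * ∑ v ∈ A, d v ≤ ∑ v ∈ S, d v →
      φ * ∑ v ∈ A, d v ≤ ((F.filter fun e => ¬(a e ∈ A ↔ b e ∈ A)).card : ℝ))
    (y : V → ℝ) (hy : ∀ v, v ∉ S → y v = 0) (hsum : ∑ v, d v * y v = 0) :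
    φ ^ 2 / 2 * ∑ v, d v * y v ^ 2 ≤ ∑ e ∈ F, (y (a e) - y (b e)) ^ 2 := by
  rcases S.eq_empty_or_nonempty with rfl | hS
  · have h0 : ∀ v, y v = 0 := fun v => hy v (by simp)
    simp [h0]
  obtain ⟨t, hup, hdown⟩ := exists_weighted_median S hS d hd0 y
  let p : V → ℝ := fun v => if v ∈ S then max (y v - t) 0 else 0
  let q : V → ℝ := fun v => if v ∈ S then max (t - y v) 0 else 0
  have hexp : ∀ (r : V → Prop), 2 * ∑ v ∈ S.filter r, d v ≤ ∑ v ∈ S, d v →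
      ∀ A : Finset V, (∀ v ∈ A, v ∈ S ∧ r v) →
      φ * ∑ v ∈ A, d v ≤ ((F.filter fun e => ¬(a e ∈ A ↔ b e ∈ A)).card : ℝ) := by
    intro r hr A hA
    refine hφ A (fun v hv => (hA v hv).1) (le_trans ?_ hr)
    exact mul_le_mul_of_nonneg_left (Finset.sum_le_sum_of_subset_of_nonneg
      (fun v hv => Finset.mem_filter.2 (hA v hv)) fun v _ _ => hd0 v) zero_le_two
  have hp := sq_mul_sum_sq_le_of_expansion a b F d hd0 hd φ hφ0 p
    (fun v => by by_cases hv : v ∈ S <;> simp [p, hv])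
    (fun A hA => hexp (fun v => t < y v) hup A fun v hv => by
      have := hA v hv
      by_cases hvS : v ∈ S
      · exact ⟨hvS, by simpa [p, hvS] using this⟩
      · simp [p, hvS] at this)
  have hq := sq_mul_sum_sq_le_of_expansion a b F d hd0 hd φ hφ0 q
    (fun v => by by_cases hv : v ∈ S <;> simp [q, hv])
    (fun A hA => hexp (fun v => y v < t) hdown A fun v hv => by
      have := hA v hv
      by_cases hvS : v ∈ S
      · exact ⟨hvS, by simpa [q, hvS] using this⟩
      · simp [q, hvS] at this)
  have hedge : ∑ e ∈ F, (p (a e) - p (b e)) ^ 2 + ∑ e ∈ F, (q (a e) - q (b e)) ^ 2 ≤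
      ∑ e ∈ F, (y (a e) - y (b e)) ^ 2 := by
    rw [← Finset.sum_add_distrib]
    refine Finset.sum_le_sum fun e he => ?_
    obtain ⟨h1, h2⟩ := hF e he
    simp only [p, q, h1, h2, if_true]
    rcases le_total (y (a e)) t with h3 | h3 <;> rcases le_total (y (b e)) t with h4 | h4
    · rw [max_eq_right (by linarith), max_eq_right (by linarith), max_eq_left (by linarith),
        max_eq_left (by linarith)]
      nlinarith
    · rw [max_eq_right (by linarith), max_eq_left (by linarith), max_eq_left (by linarith),
        max_eq_right (by linarith)]
      nlinarith [mul_nonneg (sub_nonneg.2 h3) (sub_nonneg.2 h4)]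
    · rw [max_eq_left (by linarith), max_eq_right (by linarith), max_eq_right (by linarith),
        max_eq_left (by linarith)]
      nlinarith [mul_nonneg (sub_nonneg.2 h3) (sub_nonneg.2 h4)]
    · rw [max_eq_left (by linarith), max_eq_left (by linarith), max_eq_right (by linarith),
        max_eq_right (by linarith)]
      nlinarith
  have hvert : ∑ v, d v * y v ^ 2 ≤ ∑ v, d v * p v ^ 2 + ∑ v, d v * q v ^ 2 := by
    have hle : ∑ v, (d v * y v ^ 2 - 2 * t * (d v * y v)) ≤
        ∑ v, (d v * p v ^ 2 + d v * q v ^ 2) := by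
      refine Finset.sum_le_sum fun v _ => ?_
      by_cases hv : v ∈ S
      · simp only [p, q, hv, if_true]
        have := hd0 v
        rcases le_total (y v) t with h | h
        · rw [max_eq_right (by linarith), max_eq_left (by linarith)]
          nlinarith [mul_nonneg this (sq_nonneg t)]
        · rw [max_eq_left (by linarith), max_eq_right (by linarith)]
          nlinarith [mul_nonneg this (sq_nonneg t)]
      · simp [p, q, hv, hy v hv]
    rw [Finset.sum_sub_distrib, ← Finset.mul_sum, hsum, Finset.sum_add_distrib] at hle
    linarith
  have hpos : 0 ≤ φ ^ 2 / 2 := by positivity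
  nlinarith [mul_le_mul_of_nonneg_left hvert hpos]

/-- Splitting mass `x + y` into `x ≤ y` lowers `s ↦ s log s` by at least `x log 2`. -/
theorem log_two_mul_le_mul_log_add_sub {x y : ℝ} (hx : 0 < x) (hxy : x ≤ y) :
    Real.log 2 * x ≤
      (x + y) * Real.log (x + y) - x * Real.log x - y * Real.log y := by
  have hy : 0 < y := hx.trans_le hxy
  have h1 : Real.log 2 + Real.log x ≤ Real.log (x + y) := by
    rw [← Real.log_mul two_ne_zero hx.ne']
    exact Real.log_le_log (by positivity) (by linarith)
  have h2 : Real.log y ≤ Real.log (x + y) := Real.log_le_log hy (by linarith)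
  nlinarith [mul_le_mul_of_nonneg_left h1 hx.le, mul_le_mul_of_nonneg_left h2 hy.le]

/-- Expander decomposition: a partition minimizing the number of crossing edges plus `K` times
the sum of `s log s` over the volumes `s` of its parts has expanding parts. -/
theorem exists_expander_partition {V E : Type} [Fintype V] [DecidableEq V] [Nonempty V]
    [Fintype E] (a b : E → V) (d : V → ℝ) (hd : ∀ v, 1 ≤ d v) (K : ℝ) (hK : 0 ≤ K) :
    ∃ P : V → V,
      ((univ.filter fun e => P (a e) ≠ P (b e)).card : ℝ) ≤
        K * ((∑ v, d v) * Real.log (∑ v, d v)) ∧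
      ∀ i, ∀ A ⊆ univ.filter (fun v => P v = i),
        2 * ∑ v ∈ A, d v ≤ ∑ v ∈ univ.filter (fun v => P v = i), d v →
        K * Real.log 2 * ∑ v ∈ A, d v ≤
          (((univ.filter fun e => P (a e) = i ∧ P (b e) = i).filter
            fun e => ¬(a e ∈ A ↔ b e ∈ A)).card : ℝ) := by
  have hd0 : ∀ v, 0 < d v := fun v => zero_lt_one.trans_le (hd v)
  let vol : (V → V) → V → ℝ := fun P i => ∑ v ∈ univ.filter (fun v => P v = i), d v
  let pot : (V → V) → ℝ := fun P => ((univ.filter fun e => P (a e) ≠ P (b e)).card : ℝ) +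
    K * ∑ i, vol P i * Real.log (vol P i)
  obtain ⟨P, hP⟩ := Finite.exists_min pot
  refine ⟨P, ?_, ?_⟩
  · obtain ⟨o⟩ := ‹Nonempty V›
    have hconst : pot (fun _ => o) = K * ((∑ v, d v) * Real.log (∑ v, d v)) := by
      simp only [pot]
      rw [Finset.sum_eq_single o]
      · simp [vol]
      · intro i _ hi
        simp [vol, hi.symm]
      · simp
    have hnonneg : 0 ≤ ∑ i, vol P i * Real.log (vol P i) := by
      refine Finset.sum_nonneg fun i _ => ?_
      rcases (univ.filter fun v => P v = i).eq_empty_or_nonempty with hE | ⟨w, hw⟩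
      · simp [vol, hE]
      · have h1 : 1 ≤ vol P i := (hd w).trans
          (Finset.single_le_sum (f := d) (fun v _ => (hd0 v).le) hw)
        exact mul_nonneg (zero_le_one.trans h1) (Real.log_nonneg h1)
    have := hP fun _ => o
    rw [hconst] at this
    exact le_trans (le_add_of_nonneg_right (mul_nonneg hK hnonneg)) this
  intro i A hA hhalf
  rcases A.eq_empty_or_nonempty with rfl | hne
  · simp
  have hAi : ∀ v ∈ A, P v = i := fun v hv => by simpa using hA hv
  set x := ∑ v ∈ A, d v with hx
  have hx0 : 0 < x := Finset.sum_pos (fun v _ => hd0 v) hne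
  have hsplit : ∑ v ∈ univ.filter (fun v => P v = i) \ A, d v = vol P i - x :=
    eq_sub_of_add_eq (Finset.sum_sdiff hA)
  have hhalf' : 2 * x ≤ vol P i := hhalf
  obtain ⟨u, hu⟩ : (univ.filter (fun v => P v = i) \ A).Nonempty := by
    by_contra hcon
    rw [Finset.not_nonempty_iff_eq_empty.1 hcon] at hsplit
    simp only [Finset.sum_empty] at hsplit
    linarith
  obtain ⟨w, hw⟩ := hne
  have hui : P u = i := by simpa using (Finset.mem_sdiff.1 hu).1
  have huA : u ∉ A := (Finset.mem_sdiff.1 hu).2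
  have hninj : ¬ Function.Injective P := fun h =>
    huA (h (hui.trans (hAi w hw).symm) ▸ hw)
  obtain ⟨j, hj⟩ : ∃ j, ∀ v, P v ≠ j := by
    by_contra! hcon
    exact hninj (Finite.injective_iff_surjective.2 hcon)
  have hij : i ≠ j := fun h => hj u (hui.trans h)
  let Q : V → V := fun v => if v ∈ A then j else P v
  have hQj : vol Q j = x := by
    simp only [vol, hx]
    congr 1
    ext v
    by_cases hv : v ∈ A <;> simp [Q, hv, hj]
  have hQi : vol Q i = vol P i - x := by
    rw [← hsplit]
    simp only [vol]
    congr 1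
    ext v
    by_cases hv : v ∈ A <;> simp [Q, hv, hij.symm]
  have hQk : ∀ k, k ≠ i → k ≠ j → vol Q k = vol P k := by
    intro k hki hkj
    simp only [vol]
    congr 1
    ext v
    by_cases hv : v ∈ A
    · simp [Q, hv, hAi v hv, hki.symm, hkj.symm]
    · simp [Q, hv]
  have hPj : vol P j = 0 := by simp [vol, hj]
  have hent : ∑ k, vol P k * Real.log (vol P k) - ∑ k, vol Q k * Real.log (vol Q k) =
      vol P i * Real.log (vol P i) - x * Real.log x - (vol P i - x) * Real.log (vol P i - x) := by
    rw [← Finset.sum_sub_distrib, Finset.sum_eq_add_of_mem i j (mem_univ _) (mem_univ _) hij]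
    · rw [hQi, hQj, hPj]
      ring
    · intro k _ hk
      rw [hQk k hk.1 hk.2, sub_self]
  have hcut : (univ.filter fun e => Q (a e) ≠ Q (b e)).card ≤
      (univ.filter fun e => P (a e) ≠ P (b e)).card +
      ((univ.filter fun e => P (a e) = i ∧ P (b e) = i).filter
            fun e => ¬(a e ∈ A ↔ b e ∈ A)).card := by
    refine le_trans (Finset.card_le_card ?_) (Finset.card_union_le _ _)
    intro e he
    simp only [mem_filter, mem_univ, true_and, mem_union] at he ⊢
    by_cases h : P (a e) = P (b e)
    · right
      by_cases h1 : a e ∈ A <;> by_cases h2 : b e ∈ A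
      · simp [Q, h1, h2] at he
      · simp [h1, h2, ← h, hAi _ h1]
      · simp [h1, h2, h, hAi _ h2]
      · simp [Q, h1, h2, h] at he
    · exact Or.inl h
  have hcut' : ((univ.filter fun e => Q (a e) ≠ Q (b e)).card : ℝ) ≤
      ((univ.filter fun e => P (a e) ≠ P (b e)).card : ℝ) +
      (((univ.filter fun e => P (a e) = i ∧ P (b e) = i).filter
            fun e => ¬(a e ∈ A ↔ b e ∈ A)).card : ℝ) := by exact_mod_cast hcut
  have hlog := log_two_mul_le_mul_log_add_sub hx0 (show x ≤ vol P i - x by linarith)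
  rw [add_sub_cancel, ← hent] at hlog
  have hmin : pot P ≤ pot Q := hP Q
  simp only [pot] at hmin
  have := mul_le_mul_of_nonneg_left hlog hK
  rw [mul_sub] at this
  linarith

/-- Handshake identity: summing over both endpoints of every edge weighs vertices by degree. -/
theorem sum_endpoints_eq_sum_degree_mul {V E : Type} [Fintype V] [DecidableEq V] [Fintype E]
    (a b : E → V) (hab : ∀ e, a e ≠ b e) (f : V → ℝ) :
    ∑ e, (f (a e) + f (b e)) =
      ∑ v, ((univ.filter fun e => a e = v ∨ b e = v).card : ℝ) * f v := by
  have hdeg : ∀ v, ((univ.filter fun e => a e = v ∨ b e = v).card : ℝ) * f v =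
      ∑ e, ((if a e = v then f v else 0) + (if b e = v then f v else 0)) := by
    intro v
    rw [Finset.card_filter, Nat.cast_sum, Finset.sum_mul]
    refine Finset.sum_congr rfl fun e _ => ?_
    have := hab e
    by_cases h1 : a e = v <;> by_cases h2 : b e = v
    · exact absurd (h1.trans h2.symm) this
    all_goals simp [h1, h2]
  rw [Finset.sum_congr rfl fun v _ => hdeg v, Finset.sum_comm]
  exact Finset.sum_congr rfl fun e _ => by simp [Finset.sum_add_distrib]

theorem stmt_6 : ∃ c : ℝ, 0 < c ∧
    ∀ (V : Type) [Fintype V] [DecidableEq V] (E : Type) [Fintype E],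
    ∀ (a b : E → V), (∀ e, a e ≠ b e) →
    ∀ m : ℕ, m = Fintype.card E → 2 ≤ m →
    -- no isolated vertices
    (∀ v : V, ∃ e : E, a e = v ∨ b e = v) →
    ∀ ε : ℝ, ε ∈ Set.Ioo (0 : ℝ) 1 →
    ∃ (T : ℕ) (P : V → Fin T),
      -- (a) few edges cross between different parts
      ((Finset.univ.filter fun e : E => P (a e) ≠ P (b e)).card : ℝ) ≤ ε * m ∧
      -- (b) each part, with self-loops preserving `G`-degrees, has normalized-Laplacian
      -- spectral gap at least `c ε² / log² m` (stated variationally; vectors on `V_i`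
      -- are encoded as vectors on `V` supported on `V_i`)
      ∀ (i : Fin T) (z : V → ℝ),
        (∀ v, P v ≠ i → z v = 0) →
        (∑ v, z v * Real.sqrt ((Finset.univ.filter fun e : E => a e = v ∨ b e = v).card : ℝ)) = 0 →
        (c * ε ^ 2 / (Real.log m) ^ 2) * (∑ v, (z v) ^ 2) ≤
          (fun y : V → ℝ => y ⬝ᵥ
              ((∑ e ∈ Finset.univ.filter (fun e : E => P (a e) = i ∧ P (b e) = i),
                edgeLapV (a e) (b e)) *ᵥ y))
            (fun v => z v / Real.sqrt ((Finset.univ.filter fun e : E => a e = v ∨ b e = v).card : ℝ)) := by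
  refine ⟨Real.log 2 ^ 2 / 32, by positivity, ?_⟩
  intro V _ _ E _ a b hab m hm hm2 hiso ε hε
  set d : V → ℝ := fun v => ((univ.filter fun e : E => a e = v ∨ b e = v).card : ℝ) with hd
  have hd1 : ∀ v, 1 ≤ d v := fun v => by
    obtain ⟨e, he⟩ := hiso v
    have : 0 < (univ.filter fun e : E => a e = v ∨ b e = v).card :=
      Finset.card_pos.2 ⟨e, by simpa using he⟩
    exact Nat.one_le_cast.2 this
  have hd0 : ∀ v, 0 < d v := fun v => zero_lt_one.trans_le (hd1 v)
  have hshake := sum_endpoints_eq_sum_degree_mul a b hab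
  have hvol : ∑ v, d v = 2 * m := by
    have := hshake fun _ => 1
    simp only [mul_one, Finset.sum_const, Finset.card_univ, ← hm, nsmul_eq_mul] at this
    rw [hd, ← this]
    ring
  have : Nonempty E := Fintype.card_pos_iff.1 (by omega)
  have : Nonempty V := ⟨a (Classical.arbitrary E)⟩
  have hm2' : (2 : ℝ) ≤ m := by exact_mod_cast hm2
  have hlog : 0 < Real.log m := Real.log_pos (by linarith)
  obtain ⟨hε0, -⟩ := hε
  obtain ⟨P, hcross, hexp⟩ := exists_expander_partition a b d hd1 (ε / (4 * Real.log m))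
    (by positivity)
  let σ := Fintype.equivFin V
  refine ⟨Fintype.card V, fun v => σ (P v), ?_, ?_⟩
  · simp only [ne_eq, σ.injective.eq_iff]
    refine hcross.trans ?_
    rw [hvol]
    have h2m : Real.log (2 * m) ≤ 2 * Real.log m := by
      rw [Real.log_mul two_ne_zero (by linarith)]
      have := Real.log_le_log two_pos hm2'
      linarith
    calc ε / (4 * Real.log m) * (2 * m * Real.log (2 * m))
        ≤ ε / (4 * Real.log m) * (2 * m * (2 * Real.log m)) := by gcongr
      _ = ε * m := by
        field_simp
        ring
  intro i z hz hsum
  obtain ⟨i, rfl⟩ := σ.surjective i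
  simp only [ne_eq, σ.injective.eq_iff] at hz ⊢
  rw [dotProduct_sum_edgeLapV_mulVec]
  have hsq : ∀ v, Real.sqrt (d v) ^ 2 = d v := fun v => Real.sq_sqrt (hd0 v).le
  have hsq0 : ∀ v, Real.sqrt (d v) ≠ 0 := fun v => (Real.sqrt_pos.2 (hd0 v)).ne'
  have hch := cheeger_of_expansion a b (univ.filter fun v => P v = i)
    (univ.filter fun e => P (a e) = i ∧ P (b e) = i) (fun e he => by simpa using he)
    d (fun v => (hd0 v).le)
    (fun f hf => (Finset.sum_le_sum_of_subset_of_nonneg (Finset.subset_univ _)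
      fun e _ _ => add_nonneg (hf _) (hf _)).trans (hshake f).le)
    (ε / (4 * Real.log m) * Real.log 2) (by positivity) (hexp i)
    (fun v => z v / Real.sqrt (d v))
    (fun v hv => by
      rw [hz v (by simpa using hv), zero_div])
    (by
      rw [← hsum]
      refine Finset.sum_congr rfl fun v _ => ?_
      have h1 := hsq v
      have h2 := hsq0 v
      change d v * (z v / Real.sqrt (d v)) = z v * Real.sqrt (d v)
      field_simp
      rw [h1, mul_comm])
  convert hch using 1
  have hterm : ∀ v, d v * (z v / Real.sqrt (d v)) ^ 2 = z v ^ 2 := fun v => by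
    rw [div_pow, hsq]
    have := (hd0 v).ne'
    field_simp
  simp only [hterm]
  congr 1
  field_simp
  norm_num
end

section
/- Let n ≥ 1 and ε ∈ [0,1], and let G be a bipartite graph obtained from the complete bipartite graph K_{n,n} (with n left vertices and n right vertices) by deleting at most εn² edges. Then G has a connected component containing at least 2n(1−ε) vertices. -/
open SimpleGraph
open scoped Classical

/-- The number of pairs with a common label is at most `M / 4` times the number of elements,
where `M` bounds the size of every label class. -/
lemma four_mul_card_eq_label_le {α β C : Type*} [Fintype α] [Fintype β] [Fintype C]
    (f : α → C) (g : β → C) (M : ℕ)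
    (hM : ∀ c, (Finset.univ.filter (f · = c)).card + (Finset.univ.filter (g · = c)).card ≤ M) :
    4 * (Finset.univ.filter fun p : α × β => f p.1 = g p.2).card ≤
      M * (Fintype.card α + Fintype.card β) := by
  have hα : Fintype.card α = ∑ c, (Finset.univ.filter (f · = c)).card :=
    Finset.card_eq_sum_card_fiberwise (fun _ _ => Finset.mem_univ _)
  have hβ : Fintype.card β = ∑ c, (Finset.univ.filter (g · = c)).card :=
    Finset.card_eq_sum_card_fiberwise (fun _ _ => Finset.mem_univ _)
  have hαβ : (Finset.univ.filter fun p : α × β => f p.1 = g p.2).card =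
      ∑ c, (Finset.univ.filter (f · = c)).card * (Finset.univ.filter (g · = c)).card := by
    rw [Finset.card_eq_sum_card_fiberwise (f := fun p : α × β => f p.1) (t := Finset.univ)
      (fun _ _ => Finset.mem_univ _)]
    refine Finset.sum_congr rfl fun c _ => ?_
    rw [← Finset.card_product]
    congr 1
    ext p
    simp only [Finset.mem_filter, Finset.mem_univ, true_and, Finset.mem_product]
    grind
  rw [hα, hβ, hαβ, ← Finset.sum_add_distrib, Finset.mul_sum, Finset.mul_sum]
  refine Finset.sum_le_sum fun c _ => ?_
  rw [← mul_assoc]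
  exact (four_mul_le_sq_add _ _).trans
    ((sq _).le.trans (Nat.mul_le_mul_right _ (hM c)))

/-- Every pair of vertices on opposite sides of a bipartite graph lying in different connected
components is a missing edge. -/
lemma card_mul_card_le_card_sameComponent_add_ncard_missing {α β : Type*} [Fintype α] [Fintype β]
    (G : SimpleGraph (α ⊕ β)) :
    Fintype.card α * Fintype.card β ≤
      (Finset.univ.filter fun p : α × β => G.connectedComponentMk (Sum.inl p.1) =
        G.connectedComponentMk (Sum.inr p.2)).card +
      ((completeBipartiteGraph α β).edgeSet \ G.edgeSet).ncard := by
  rw [← Fintype.card_prod, ← Finset.card_univ, ← Finset.card_filter_add_card_filter_not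
    (fun p : α × β => G.connectedComponentMk (Sum.inl p.1) = G.connectedComponentMk (Sum.inr p.2))]
  refine Nat.add_le_add_left ?_ _
  rw [← Set.ncard_coe_finset]
  refine Set.ncard_le_ncard_of_injOn (fun p => s(Sum.inl p.1, Sum.inr p.2)) ?_ ?_ (Set.toFinite _)
  · intro p hp
    simp only [Finset.coe_filter, Finset.mem_univ, true_and, Set.mem_ofPred_eq] at hp
    refine ⟨by simp, fun h => hp ?_⟩
    exact ConnectedComponent.sound (Adj.reachable h)
  · rintro ⟨a, b⟩ _ ⟨c, d⟩ _ h
    simpa using h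

/-- A connected component of a graph on a disjoint union splits into its two sides. -/
lemma ncard_reachable_sum {α β : Type*} [Fintype α] [Fintype β]
    (G : SimpleGraph (α ⊕ β)) (v : α ⊕ β) :
    {u | G.Reachable v u}.ncard =
      (Finset.univ.filter fun a => G.connectedComponentMk (Sum.inl a) =
        G.connectedComponentMk v).card +
      (Finset.univ.filter fun b => G.connectedComponentMk (Sum.inr b) =
        G.connectedComponentMk v).card := by
  rw [← Finset.card_disjSum, ← Set.ncard_coe_finset]
  congr 1
  ext (u | u) <;> simp [ConnectedComponent.eq, reachable_comm]

theorem stmt_8 {n : ℕ} (hn : 1 ≤ n) (ε : ℝ) (hε : ε ∈ Set.Icc (0 : ℝ) 1)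
    (G : SimpleGraph (Fin n ⊕ Fin n))
    (hsub : G ≤ completeBipartiteGraph (Fin n) (Fin n))
    (hdel : ((((completeBipartiteGraph (Fin n) (Fin n)).edgeSet \ G.edgeSet).ncard : ℝ) ≤
      ε * (n : ℝ) ^ 2)) :
    ∃ v : Fin n ⊕ Fin n, 2 * (n : ℝ) * (1 - ε) ≤ ({u | G.Reachable v u}.ncard : ℝ) := by
  obtain ⟨v, -, hv⟩ := Finset.exists_max_image Finset.univ
    (fun v => {u | G.Reachable v u}.ncard) ⟨Sum.inl (⟨0, hn⟩ : Fin n), Finset.mem_univ _⟩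
  refine ⟨v, ?_⟩
  have hsame := four_mul_card_eq_label_le
    (fun a : Fin n => G.connectedComponentMk (Sum.inl a))
    (fun b : Fin n => G.connectedComponentMk (Sum.inr b)) {u | G.Reachable v u}.ncard (by
      intro c
      induction c using ConnectedComponent.ind with
      | _ w => exact (ncard_reachable_sum G w).symm.le.trans (hv w (Finset.mem_univ _)))
  have hmissing := card_mul_card_le_card_sameComponent_add_ncard_missing G
  simp only [Fintype.card_fin] at hsame hmissing
  rify at hsame hmissing
  have hpos : (0 : ℝ) < n := by exact_mod_cast hn
  refine le_of_mul_le_mul_right ?_ hpos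
  linarith
end
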